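/- arXiv:2102.03855 — 2 statements merged into one kernel-verified Lean document; each statement's English description precedes it below -/
import Mathlib

section
/- Let k ≥ 0 be an integer and let G be a simple graph of order n ≥ 2k+7. If e(G) ≥ C(n−k−2, 2) + C(k+3, 2), then G is weakly pancyclic with girth 3, i.e. G contains a triangle and a cycle of every length ℓ with 3 ≤ ℓ ≤ c(G), where c(G) is the circumference of G. -/
open SimpleGraph

/-- `G` contains a cycle of length `l`. -/
def HasCycleLen {V : Type} (G : SimpleGraph V) (l : ℕ) : Prop :=
  ∃ (v : V) (c : G.Walk v v), c.IsCycle ∧ c.length = l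

/-- The circumference of `G`: the length of a longest cycle. -/
noncomputable def circumference {V : Type} (G : SimpleGraph V) : ℕ :=
  sSup {l | HasCycleLen G l}

/-- `G` is weakly pancyclic with girth 3: it contains a cycle of every length `l`
with `3 ≤ l ≤ c(G)`. -/
def WeaklyPancyclic3 {V : Type} (G : SimpleGraph V) : Prop :=
  HasCycleLen G 3 ∧ ∀ l : ℕ, 3 ≤ l → l ≤ circumference G → HasCycleLen G l

/-- The number of edges of `G`. -/
noncomputable def edgeCount {V : Type} (G : SimpleGraph V) : ℕ :=
  Nat.card G.edgeSet

/-- The degree of `v` in `G`. -/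
noncomputable def degCount {V : Type} (G : SimpleGraph V) (v : V) : ℕ :=
  Nat.card (G.neighborSet v)

/-- The spectral radius of `G`: the largest eigenvalue of the adjacency matrix. -/
noncomputable def specRad {V : Type} [Finite V] (G : SimpleGraph V) : ℝ :=
  letI := Fintype.ofFinite V
  letI := Classical.decEq V
  letI := Classical.decRel G.Adj
  sSup (spectrum ℝ (G.adjMatrix ℝ))

/-- The signless Laplacian spectral radius of `G`: the largest eigenvalue of `D(G) + A(G)`. -/
noncomputable def qSpecRad {V : Type} [Finite V] (G : SimpleGraph V) : ℝ :=
  letI := Fintype.ofFinite V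
  letI := Classical.decEq V
  letI := Classical.decRel G.Adj
  sSup (spectrum ℝ (Matrix.diagonal (fun v => (degCount G v : ℝ)) + G.adjMatrix ℝ))

/-- `L_{n,k} = K_1 ∨ (K_{n-k-1} + K_k)`: vertex `0` is the common vertex of a clique on
the `n - k` vertices `{0, …, n-k-1}` and a clique on the `k+1` vertices `{0} ∪ {n-k, …, n-1}`. -/
def Lgraph (n k : ℕ) : SimpleGraph (Fin n) :=
  SimpleGraph.fromRel (fun u v =>
    u.val = 0 ∨ v.val = 0 ∨ (u.val < n - k ∧ v.val < n - k) ∨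
      (n - k ≤ u.val ∧ n - k ≤ v.val))

/-- `Γ_{n,t} = K_2 ∨ (K_{n-2-t} + t·K_1)`: vertices `0,1` are joined to everything,
vertices `2, …, n-t-1` form a clique, and vertices `n-t, …, n-1` are independent. -/
def GammaGraph (n t : ℕ) : SimpleGraph (Fin n) :=
  SimpleGraph.fromRel (fun u v =>
    u.val < 2 ∨ v.val < 2 ∨ (u.val < n - t ∧ v.val < n - t))

/-- `F` is a member of the family `F_{n,k}`: there is a clique `K` on `n - k` vertices
such that each connected component of `F - K` is a clique all of whose vertices are
adjacent to one single common vertex of `K` and to no other vertex of `K`. -/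
def MemF (n k : ℕ) (F : SimpleGraph (Fin n)) : Prop :=
  ∃ K : Finset (Fin n), K.card = n - k ∧ F.IsClique (↑K : Set (Fin n)) ∧
    (∀ u v : ({x : Fin n | x ∉ K} : Set (Fin n)),
      (F.induce {x : Fin n | x ∉ K}).Reachable u v → (u = v ∨ F.Adj u.1 v.1)) ∧
    (∀ u : ({x : Fin n | x ∉ K} : Set (Fin n)), ∃! w : Fin n, w ∈ K ∧ F.Adj u.1 w) ∧
    (∀ u v : ({x : Fin n | x ∉ K} : Set (Fin n)),
      (F.induce {x : Fin n | x ∉ K}).Reachable u v →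
        ∀ w ∈ K, F.Adj u.1 w → F.Adj v.1 w)

/-- `G` is a subgraph of `H` (up to relabelling): there is an injective graph
homomorphism from `G` to `H`. -/
def IsSubgraphOf {n : ℕ} (G H : SimpleGraph (Fin n)) : Prop :=
  ∃ f : G →g H, Function.Injective f

/-- `Pth G u v T`: there is a path from `u` to `v` whose vertex set is exactly `T`. -/
inductive Pth {V : Type} [DecidableEq V] (G : SimpleGraph V) : V → V → Finset V → Prop
  | single (u : V) : Pth G u u {u}
  | cons {w u v : V} {T : Finset V} (h : G.Adj w u) (hw : w ∉ T) (p : Pth G u v T) :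
      Pth G w v (insert w T)

/-- `T` is the vertex set of a closed path (a cycle when `T` has at least three elements). -/
def Cyc {V : Type} [DecidableEq V] (G : SimpleGraph V) (T : Finset V) : Prop :=
  ∃ u v, Pth G u v T ∧ G.Adj v u

/-- Degree of `v` into the set `S`. -/
def dg {V : Type} (G : SimpleGraph V) [DecidableRel G.Adj] (S : Finset V) (v : V) : ℕ :=
  (S.filter (G.Adj v)).card

/-- `f` restricted to `{0, …, m-1}` is a path. -/
def PRep {V : Type} (G : SimpleGraph V) (f : ℕ → V) (m : ℕ) : Prop :=
  (∀ i j, i < m → j < m → f i = f j → i = j) ∧ ∀ i, i + 1 < m → G.Adj (f i) (f (i + 1))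

section
variable {V : Type} [DecidableEq V] {G : SimpleGraph V}

theorem Pth.append {u v u' v' : V} {T T' : Finset V} (p : Pth G u v T) (h : G.Adj v u')
    (q : Pth G u' v' T') (hd : Disjoint T T') : Pth G u v' (T ∪ T') := by
  induction p with
  | single u =>
    rw [← Finset.insert_eq]
    exact Pth.cons h (by simpa using hd) q
  | cons hw hn p ih =>
    rw [Finset.disjoint_insert_left] at hd
    rw [Finset.insert_union]
    exact Pth.cons hw (by simp [hn, hd.1]) (ih h hd.2)

theorem Pth.reverse {u v : V} {T : Finset V} (p : Pth G u v T) : Pth G v u T := by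
  induction p with
  | single u => exact Pth.single u
  | @cons w u v T hw hn p ih =>
    have := ih.append hw.symm (Pth.single w) (by simpa using hn)
    rwa [Finset.union_comm, ← Finset.insert_eq] at this

theorem Pth.left_mem {u v : V} {T : Finset V} (p : Pth G u v T) : u ∈ T := by
  cases p <;> simp

theorem Pth.right_mem {u v : V} {T : Finset V} (p : Pth G u v T) : v ∈ T :=
  p.reverse.left_mem

theorem Pth.exists_rep {u v : V} {T : Finset V} (p : Pth G u v T) :
    ∃ f : ℕ → V, PRep G f T.card ∧ (Finset.range T.card).image f = T ∧ f 0 = u ∧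
      f (T.card - 1) = v := by
  induction p with
  | single u => exact ⟨fun _ => u, by constructor <;> simp, by ext; simp [eq_comm], rfl, rfl⟩
  | @cons w u v T hw hn p ih =>
    obtain ⟨f, ⟨hf1, hf2⟩, him, h0, hl⟩ := ih
    have hpos : 0 < T.card := Finset.card_pos.2 ⟨_, p.left_mem⟩
    have hmem : ∀ i, i < T.card → f i ∈ T := fun i hi => by
      rw [← him]; exact Finset.mem_image_of_mem f (Finset.mem_range.2 hi)
    rw [Finset.card_insert_of_notMem hn]
    refine ⟨fun i => if i = 0 then w else f (i - 1), ⟨?_, ?_⟩, ?_, ?_, ?_⟩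
    · intro i j hi hj hij
      have a1 := hmem (i - 1)
      have a2 := hmem (j - 1)
      have a3 := hf1 (i - 1) (j - 1)
      dsimp only at hij
      split_ifs at hij with c1 c2 c2
      · omega
      · exfalso; apply hn; rw [hij]; apply a2; omega
      · exfalso; apply hn; rw [← hij]; apply a1; omega
      · have := a3 (by omega) (by omega) hij
        omega
    · intro i hi
      rcases i with _ | i
      · simpa [h0] using hw
      · simpa using hf2 i (by omega)
    · rw [Finset.range_add_one', Finset.image_insert, Finset.map_eq_image, Finset.image_image]
      simp only [if_true]
      congr 1
    · simp
    · simp [hpos.ne', hl]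

theorem PRep.arc_aux {f : ℕ → V} {m : ℕ} (hf : PRep G f m) (k : ℕ) : ∀ a, a + k < m →
    Pth G (f a) (f (a + k)) ((Finset.Icc a (a + k)).image f) := by
  induction k with
  | zero => intro a _; simpa using Pth.single (f a)
  | succ k ih =>
    intro a ha
    have h1 := ih (a + 1) (by omega)
    have h2 : Finset.Icc a (a + (k + 1)) = insert a (Finset.Icc (a + 1) (a + 1 + k)) := by
      ext x; simp; omega
    rw [h2, Finset.image_insert, show a + (k + 1) = a + 1 + k by omega]
    refine Pth.cons (hf.2 a (by omega)) ?_ h1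
    intro hx
    obtain ⟨y, hy, hxy⟩ := Finset.mem_image.1 hx
    rw [Finset.mem_Icc] at hy
    have := hf.1 y a (by omega) (by omega) hxy
    omega

theorem PRep.arc {f : ℕ → V} {m : ℕ} (hf : PRep G f m) {a b : ℕ} (hab : a ≤ b) (hb : b < m) :
    Pth G (f a) (f b) ((Finset.Icc a b).image f) := by
  obtain ⟨k, rfl⟩ := Nat.exists_eq_add_of_le hab
  exact hf.arc_aux k a hb

theorem PRep.card_image {f : ℕ → V} {m : ℕ} (hf : PRep G f m) {I : Finset ℕ}
    (hI : ∀ i ∈ I, i < m) : (I.image f).card = I.card :=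
  Finset.card_image_of_injOn fun i hi j hj hij => hf.1 i j (hI i hi) (hI j hj) hij

theorem PRep.disj {f : ℕ → V} {m : ℕ} (hf : PRep G f m) {I J : Finset ℕ}
    (hI : ∀ i ∈ I, i < m) (hJ : ∀ i ∈ J, i < m) (h : Disjoint I J) :
    Disjoint (I.image f) (J.image f) := by
  rw [Finset.disjoint_left]
  intro x hx hy
  obtain ⟨i, hi, rfl⟩ := Finset.mem_image.1 hx
  obtain ⟨j, hj, hij⟩ := Finset.mem_image.1 hy
  have := hf.1 j i (hJ j hj) (hI i hi) hij
  subst this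
  exact Finset.disjoint_left.1 h hi hj

/-- Two disjoint arcs `[a,b]` and `[c,d]` glued by an edge `f b ~ f c`. -/
theorem PRep.glue {f : ℕ → V} {m : ℕ} (hf : PRep G f m) {a b c d u v : ℕ} (hab : a ≤ b) (hb : b < m)
    (hcd : c ≤ d) (hd : d < m) (hbc : b < c ∨ d < a)
    (hu : u = a ∧ v = b ∨ u = b ∧ v = a)
    {x y : ℕ} (hx : x = c ∧ y = d ∨ x = d ∧ y = c) (hadj : G.Adj (f v) (f x)) :
    Pth G (f u) (f y) ((Finset.Icc a b ∪ Finset.Icc c d).image f) := by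
  rw [Finset.image_union]
  have h1 := hf.arc hab hb
  have h2 := hf.arc hcd hd
  have hdj : Disjoint ((Finset.Icc a b).image f) ((Finset.Icc c d).image f) := by
    apply hf.disj
    · intro i hi; rw [Finset.mem_Icc] at hi; omega
    · intro i hi; rw [Finset.mem_Icc] at hi; omega
    · rw [Finset.disjoint_left]; intro i hi hj; rw [Finset.mem_Icc] at hi hj; omega
  have p1 : Pth G (f u) (f v) ((Finset.Icc a b).image f) := by
    rcases hu with ⟨rfl, rfl⟩ | ⟨rfl, rfl⟩
    · exact h1
    · exact h1.reverse
  have p2 : Pth G (f x) (f y) ((Finset.Icc c d).image f) := by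
    rcases hx with ⟨rfl, rfl⟩ | ⟨rfl, rfl⟩
    · exact h2
    · exact h2.reverse
  exact p1.append hadj p2 hdj

theorem PRep.rotate {f : ℕ → V} {m i : ℕ} (hf : PRep G f m) (hi : 0 < i) (him : i < m)
    (hc : G.Adj (f (m - 1)) (f 0)) :
    Pth G (f i) (f (i - 1)) ((Finset.range m).image f) := by
  have := hf.glue (a := i) (b := m - 1) (c := 0) (d := i - 1) (by omega) (by omega) (by omega)
    (by omega) (by omega) (Or.inl ⟨rfl, rfl⟩) (Or.inl ⟨rfl, rfl⟩) hc
  convert this using 2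
  ext x; simp; omega

/-- Start a cycle at any prescribed vertex. -/
theorem Cyc.rep_at {T : Finset V} (h : Cyc G T) {x : V} (hx : x ∈ T) :
    ∃ f : ℕ → V, PRep G f T.card ∧ (Finset.range T.card).image f = T ∧ f 0 = x ∧
      G.Adj (f (T.card - 1)) (f 0) := by
  obtain ⟨u, v, p, huv⟩ := h
  obtain ⟨f, hf, him, h0, hl⟩ := p.exists_rep
  have hx' := hx
  rw [← him] at hx'
  obtain ⟨i, hi, rfl⟩ := Finset.mem_image.1 hx'
  rw [Finset.mem_range] at hi
  rcases Nat.eq_zero_or_pos i with rfl | hpos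
  · exact ⟨f, hf, him, rfl, by rw [hl, h0]; exact huv⟩
  · have := hf.rotate hpos hi (by rw [hl, h0]; exact huv)
    rw [him] at this
    obtain ⟨g, hg, gim, g0, gl⟩ := this.exists_rep
    refine ⟨g, hg, gim, g0, ?_⟩
    rw [gl, g0]
    have := hf.2 (i - 1) (by omega)
    rwa [show i - 1 + 1 = i by omega] at this

variable [DecidableRel G.Adj]

theorem dg_eq {f : ℕ → V} {m : ℕ} {S : Finset V} (hf : PRep G f m)
    (him : (Finset.range m).image f = S) (v : V) :
    dg G S v = ((Finset.range m).filter fun j => G.Adj v (f j)).card := by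
  unfold dg
  rw [← him, Finset.filter_image]
  apply hf.card_image
  intro i hi
  exact Finset.mem_range.1 (Finset.mem_filter.1 hi).1

/-- Pigeonhole in the form used below. -/
theorem pigeon {A B I : Finset ℕ} (hA : A ⊆ I) (hB : B ⊆ I) (h : I.card < A.card + B.card) :
    ∃ x, x ∈ A ∧ x ∈ B := by
  by_contra hcon
  push Not at hcon
  have hd : Disjoint A B := Finset.disjoint_left.2 hcon
  have := Finset.card_le_card (Finset.union_subset hA hB)
  rw [Finset.card_union_of_disjoint hd] at this
  omega

/-- Wheel lemma. -/
theorem wheel {T : Finset V} (hT : Cyc G T) {v : V} (hv : v ∉ T) (hd : T.card < 2 * dg G T v)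
    {l : ℕ} (hl : 3 ≤ l) (hl' : l ≤ T.card + 1) :
    ∃ T' ⊆ insert v T, Cyc G T' ∧ T'.card = l := by
  obtain ⟨x, hx⟩ : T.Nonempty := by
    rw [← Finset.card_pos]; omega
  obtain ⟨f, hf, him, -, hc⟩ := hT.rep_at hx
  set m := T.card with hm
  rw [dg_eq hf him] at hd
  set A := (Finset.range m).filter fun j => G.Adj v (f j) with hA
  have hfin : ∀ (I : Finset ℕ) (a b : ℕ), (∀ i ∈ I, i < m) → I.card + 1 = l →
      Pth G (f a) (f b) (I.image f) → G.Adj v (f a) → G.Adj v (f b) →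
      ∃ T' ⊆ insert v T, Cyc G T' ∧ T'.card = l := by
    intro I a b hI hcard p ha hb
    have hsub : I.image f ⊆ T := by
      rw [← him]; exact Finset.image_subset_image fun i hi => Finset.mem_range.2 (hI i hi)
    have hvn : v ∉ I.image f := fun h => hv (hsub h)
    refine ⟨insert v (I.image f), Finset.insert_subset_insert _ hsub,
      ⟨v, f b, Pth.cons ha hvn p, hb.symm⟩, ?_⟩
    rw [Finset.card_insert_of_notMem hvn, hf.card_image hI, hcard]
  obtain ⟨j, hj1, hj2⟩ := pigeon (A := A) (B := A.image fun i => (i + (l - 2)) % m)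
    (I := Finset.range m) (Finset.filter_subset _ _)
    (by
      intro y hy
      obtain ⟨i, hi, rfl⟩ := Finset.mem_image.1 hy
      exact Finset.mem_range.2 (Nat.mod_lt _ (by omega)))
    (by
      rw [Finset.card_image_of_injOn, Finset.card_range]
      · omega
      · intro i hi j hj hij
        have hi' : i < m := Finset.mem_range.1 (Finset.mem_filter.1 hi).1
        have hj' : j < m := Finset.mem_range.1 (Finset.mem_filter.1 hj).1
        have : i ≡ j [MOD m] := Nat.ModEq.add_right_cancel' (l - 2) hij
        exact Nat.ModEq.eq_of_lt_of_lt this hi' hj')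
  obtain ⟨i, hi, hij⟩ := Finset.mem_image.1 hj2
  obtain ⟨hi1, hi2⟩ := Finset.mem_filter.1 hi
  obtain ⟨hj3, hj4⟩ := Finset.mem_filter.1 hj1
  rw [Finset.mem_range] at hi1 hj3
  by_cases hlt : i + (l - 2) < m
  · rw [Nat.mod_eq_of_lt hlt] at hij
    refine hfin (Finset.Icc i j) i j ?_ ?_ (hf.arc (by omega) hj3) hi2 hj4
    · intro k hk; rw [Finset.mem_Icc] at hk; omega
    · rw [Nat.card_Icc]; omega
  · rw [Nat.mod_eq_sub_mod (by omega), Nat.mod_eq_of_lt (by omega)] at hij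
    refine hfin (Finset.Icc i (m - 1) ∪ Finset.Icc 0 j) i j ?_ ?_
      (hf.glue (by omega) (by omega) (by omega) hj3 (by omega) (Or.inl ⟨rfl, rfl⟩)
        (Or.inl ⟨rfl, rfl⟩) hc) hi2 hj4
    · intro k hk; simp only [Finset.mem_union, Finset.mem_Icc] at hk; omega
    · rw [Finset.card_union_of_disjoint, Nat.card_Icc, Nat.card_Icc]
      · omega
      · rw [Finset.disjoint_left]; intro k hk hk'; rw [Finset.mem_Icc] at hk hk'; omega

/-- Two cyclically consecutive vertices of large degree sum. -/
theorem exists_pair {S : Finset V} (hS : Cyc G S)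
    (he : S.card ^ 2 < 2 * ∑ v ∈ S, dg G S v) :
    ∃ u v, Pth G u v S ∧ G.Adj v u ∧ S.card < dg G S u + dg G S v := by
  obtain ⟨u, v, p, huv⟩ := hS
  obtain ⟨f, hf, him, h0, hl⟩ := p.exists_rep
  by_contra hcon
  push Not at hcon
  have hc0 := hcon u v p huv
  have hsum : ∑ v ∈ S, dg G S v = ∑ i ∈ Finset.range S.card, dg G S (f i) := by
    have := Finset.sum_image (f := fun v => dg G S v) (g := f) (s := Finset.range S.card) (by
      intro i hi j hj hij
      simp only [Finset.coe_range, Set.mem_Iio] at hi hj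
      exact hf.1 i j hi hj hij)
    rw [him] at this
    exact this
  rw [hsum] at he
  have hstep : ∀ i, i + 1 < S.card → dg G S (f i) + dg G S (f (i + 1)) ≤ S.card := by
    intro i hi
    have := hf.rotate (i := i + 1) (by omega) hi (by rw [hl, h0]; exact huv)
    rw [him] at this
    have := hcon _ _ this (hf.2 i hi)
    rw [Nat.add_sub_cancel] at this
    omega
  obtain ⟨k, hk⟩ : ∃ k, S.card = k + 1 :=
    Nat.exists_eq_succ_of_ne_zero (Finset.card_pos.2 ⟨_, p.left_mem⟩).ne'
  rw [← h0, ← hl] at hc0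
  rw [hk] at he hc0 hstep
  rw [Nat.add_sub_cancel] at hc0
  have e1 := Finset.sum_range_succ (fun i => dg G S (f i)) k
  have e2 := Finset.sum_range_succ' (fun i => dg G S (f i)) k
  have e3 : ∑ i ∈ Finset.range k, (dg G S (f i) + dg G S (f (i + 1))) ≤
      ∑ i ∈ Finset.range k, (k + 1) :=
    Finset.sum_le_sum fun i hi => hstep i (by rw [Finset.mem_range] at hi; omega)
  rw [Finset.sum_add_distrib, Finset.sum_const, Finset.card_range, smul_eq_mul] at e3
  nlinarith

/-- A dense Hamiltonian graph has a cycle missing exactly one vertex. -/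
theorem exists_cyc_erase {S : Finset V} (hS : Cyc G S) (h4 : 4 ≤ S.card)
    (he : S.card ^ 2 < 2 * ∑ v ∈ S, dg G S v) :
    ∃ w ∈ S, Cyc G (S.erase w) := by
  obtain ⟨u, v, p, huv, hdeg⟩ := exists_pair hS he
  obtain ⟨f, hf, him, h0, hl⟩ := p.exists_rep
  set m := S.card with hm
  rw [dg_eq hf him, dg_eq hf him] at hdeg
  set A := (Finset.range m).filter fun j => G.Adj u (f j) with hA
  set B := (Finset.range m).filter fun j => G.Adj v (f j) with hB
  have hAc : A.card ≤ (A.filter (2 ≤ ·)).card + 1 := by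
    have : A ⊆ insert 1 (A.filter (2 ≤ ·)) := by
      intro j hj
      simp only [Finset.mem_insert, Finset.mem_filter, hj, true_and]
      by_contra hcon
      have : j = 0 := by omega
      subst this
      have := (Finset.mem_filter.1 hj).2
      rw [h0] at this
      exact G.irrefl this
    exact (Finset.card_le_card this).trans (Finset.card_insert_le _ _)
  have hBc : B.card ≤ ((B.filter (· + 3 ≤ m)).image (· + 2)).card + 1 := by
    rw [Finset.card_image_of_injective _ (add_left_injective 2)]
    have : B ⊆ insert (m - 2) (B.filter (· + 3 ≤ m)) := by
      intro j hj
      simp only [Finset.mem_insert, Finset.mem_filter, hj, true_and]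
      by_contra hcon
      have hjm := Finset.mem_range.1 (Finset.mem_filter.1 hj).1
      have : j = m - 1 := by omega
      subst this
      have := (Finset.mem_filter.1 hj).2
      rw [hl] at this
      exact G.irrefl this
    exact (Finset.card_le_card this).trans (Finset.card_insert_le _ _)
  obtain ⟨x, hx1, hx2⟩ := pigeon (A := A.filter (2 ≤ ·))
    (B := (B.filter (· + 3 ≤ m)).image (· + 2)) (I := Finset.Ico 2 m)
    (by
      intro x hx
      obtain ⟨h1, h2⟩ := Finset.mem_filter.1 hx
      have := Finset.mem_range.1 (Finset.mem_filter.1 h1).1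
      rw [Finset.mem_Ico]; omega)
    (by
      intro x hx
      obtain ⟨y, hy, rfl⟩ := Finset.mem_image.1 hx
      have := (Finset.mem_filter.1 hy).2
      rw [Finset.mem_Ico]; omega)
    (by rw [Nat.card_Ico]; omega)
  obtain ⟨j, hj, rfl⟩ := Finset.mem_image.1 hx2
  obtain ⟨hj1, hj2⟩ := Finset.mem_filter.1 hj
  have hvj := (Finset.mem_filter.1 hj1).2
  have huj := (Finset.mem_filter.1 (Finset.mem_filter.1 hx1).1).2
  have q := hf.glue (a := 0) (b := j) (c := j + 2) (d := m - 1) (u := j) (v := 0) (x := j + 2)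
    (y := m - 1) (by omega) (by omega) (by omega) (by omega) (by omega) (Or.inr ⟨rfl, rfl⟩)
    (Or.inl ⟨rfl, rfl⟩) (by rw [h0]; exact huj)
  refine ⟨f (j + 1), ?_, f j, f (m - 1), ?_, ?_⟩
  · rw [← him]; exact Finset.mem_image_of_mem f (Finset.mem_range.2 (by omega))
  · convert q using 1
    ext y
    conv_lhs => rw [← him]
    simp only [Finset.mem_erase, Finset.mem_image, Finset.mem_union, Finset.mem_Icc,
      Finset.mem_range]
    constructor
    · rintro ⟨hne, i, hi, rfl⟩
      refine ⟨i, ?_, rfl⟩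
      have : i ≠ j + 1 := by rintro rfl; exact hne rfl
      omega
    · rintro ⟨i, hi, rfl⟩
      refine ⟨fun h => ?_, i, by omega, rfl⟩
      have := hf.1 i (j + 1) (by omega) (by omega) h
      omega
  · rw [hl]; exact hvj

/-- Effect of deleting a vertex on the degree sum. -/
theorem sum_dg_erase {S : Finset V} {v : V} (hv : v ∈ S) :
    ∑ w ∈ S, dg G S w = ∑ w ∈ S.erase v, dg G (S.erase v) w + 2 * dg G S v := by
  have h1 : ∀ w, dg G S w = dg G (S.erase v) w + if G.Adj w v then 1 else 0 := by
    intro w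
    unfold dg
    rw [Finset.filter_erase]
    split_ifs with h
    · rw [Finset.card_erase_add_one]
      simp [hv, h]
    · rw [Finset.erase_eq_of_notMem]
      · simp
      · simp [h]
  have h2 : ∑ w ∈ S.erase v, (if G.Adj w v then 1 else 0) = dg G S v := by
    rw [h1 v, if_neg (G.irrefl), add_zero, ← Finset.card_filter]
    unfold dg
    congr 1
    ext w; simp [G.adj_comm]
  rw [← Finset.add_sum_erase S _ hv, Finset.sum_congr rfl fun w _ => h1 w,
    Finset.sum_add_distrib, h2]
  ring
/-- Crossing lemma for the two ends of a path. -/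
theorem Pth.cyc_of_deg {T : Finset V} {u v : V} (p : Pth G u v T)
    (hdeg : T.card ≤ dg G T u + dg G T v) : Cyc G T := by
  obtain ⟨f, hf, him, h0, hl⟩ := p.exists_rep
  have hpos : 0 < T.card := Finset.card_pos.2 ⟨_, p.left_mem⟩
  set m := T.card with hm
  rw [dg_eq hf him, dg_eq hf him] at hdeg
  set A := (Finset.range m).filter fun j => G.Adj u (f j) with hA
  set B := (Finset.range m).filter fun j => G.Adj v (f j) with hB
  obtain ⟨x, hx1, hx2⟩ := pigeon (A := A) (B := B.image (· + 1)) (I := Finset.Ico 1 m)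
    (by
      intro j hj
      obtain ⟨h1, h2⟩ := Finset.mem_filter.1 hj
      rw [Finset.mem_range] at h1
      rw [Finset.mem_Ico]
      refine ⟨?_, h1⟩
      by_contra hcon
      have : j = 0 := by omega
      subst this
      rw [h0] at h2
      exact G.irrefl h2)
    (by
      intro x hx
      obtain ⟨j, hj, rfl⟩ := Finset.mem_image.1 hx
      obtain ⟨h1, h2⟩ := Finset.mem_filter.1 hj
      rw [Finset.mem_range] at h1
      rw [Finset.mem_Ico]
      refine ⟨by omega, ?_⟩
      by_contra hcon
      have : j = m - 1 := by omega
      subst this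
      rw [hl] at h2
      exact G.irrefl h2)
    (by rw [Finset.card_image_of_injective _ (add_left_injective 1), Nat.card_Ico]; omega)
  obtain ⟨j, hj, rfl⟩ := Finset.mem_image.1 hx2
  obtain ⟨hj1, hj2⟩ := Finset.mem_filter.1 hj
  obtain ⟨hj3, hj4⟩ := Finset.mem_filter.1 hx1
  rw [Finset.mem_range] at hj1 hj3
  have q := hf.glue (a := 0) (b := j) (c := j + 1) (d := m - 1) (u := j) (v := 0) (x := j + 1)
    (y := m - 1) (by omega) (by omega) (by omega) (by omega) (by omega) (Or.inr ⟨rfl, rfl⟩)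
    (Or.inl ⟨rfl, rfl⟩) (by rw [h0]; exact hj4)
  refine ⟨f j, f (m - 1), ?_, ?_⟩
  · convert q using 1
    conv_lhs => rw [← him]
    congr 1
    ext i; simp; omega
  · rw [hl]; exact hj2

/-- If every vertex outside a longest cycle has large degree, there is no such vertex. -/
theorem exists_low_outside {S C : Finset V} (hCS : C ⊆ S) (hC : Cyc G C) (h3 : 3 ≤ C.card)
    (hmax : ∀ T ⊆ S, Cyc G T → T.card ≤ C.card) (hne : (S \ C).Nonempty) :
    ∃ v ∈ S \ C, 2 * dg G S v < S.card := by
  classical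
  by_contra hcon
  push Not at hcon
  set R := S \ C with hR
  have hRS : R ⊆ S := Finset.sdiff_subset
  have hdisj : Disjoint C R := Finset.disjoint_sdiff
  have hcard : C.card + R.card = S.card := by
    rw [← Finset.card_union_of_disjoint hdisj, Finset.union_sdiff_of_subset hCS]
  have hsplit : ∀ v, dg G S v = dg G C v + dg G R v := by
    intro v
    unfold dg
    rw [← Finset.card_union_of_disjoint (Finset.disjoint_filter_filter hdisj),
      ← Finset.filter_union, Finset.union_sdiff_of_subset hCS]
  have hwheel : ∀ v ∈ R, 2 * dg G C v ≤ C.card := by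
    intro v hv
    by_contra hlt
    obtain ⟨hv1, hv2⟩ := Finset.mem_sdiff.1 hv
    obtain ⟨T', hT', hcyc, hT'c⟩ := wheel hC hv2 (by omega) (l := C.card + 1) (by omega) le_rfl
    have := hmax T' (hT'.trans (Finset.insert_subset hv1 hCS)) hcyc
    omega
  -- a longest path in `R`
  obtain ⟨w, hw⟩ := hne
  obtain ⟨P, hP, hPmax⟩ := Finset.exists_max_image
    (R.powerset.filter fun T => ∃ u v, Pth G u v T) Finset.card
    ⟨{w}, by simp only [Finset.mem_filter, Finset.mem_powerset, Finset.singleton_subset_iff]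
             exact ⟨hw, w, w, Pth.single w⟩⟩
  simp only [Finset.mem_filter, Finset.mem_powerset] at hP hPmax
  obtain ⟨hPR, u, v, p⟩ := hP
  have hnb : ∀ u v, Pth G u v P → R.filter (G.Adj u) ⊆ P.erase u := by
    intro u v p y hy
    obtain ⟨hyR, hyu⟩ := Finset.mem_filter.1 hy
    rw [Finset.mem_erase]
    refine ⟨hyu.ne.symm, ?_⟩
    by_contra hyP
    have := hPmax (insert y P) ⟨Finset.insert_subset hyR hPR, y, v, Pth.cons hyu.symm hyP p⟩
    rw [Finset.card_insert_of_notMem hyP] at this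
    omega
  have hdR : ∀ u v, Pth G u v P → dg G R u ≤ P.card - 1 ∧ dg G R u ≤ dg G P u := by
    intro u v p
    refine ⟨?_, ?_⟩
    · rw [← Finset.card_erase_of_mem p.left_mem]
      exact Finset.card_le_card (hnb u v p)
    · apply Finset.card_le_card
      intro y hy
      exact Finset.mem_filter.2 ⟨Finset.mem_of_mem_erase (hnb u v p hy), (Finset.mem_filter.1 hy).2⟩
  have huR : u ∈ R := hPR p.left_mem
  have hvR : v ∈ R := hPR p.right_mem
  have hpr : P.card ≤ R.card := Finset.card_le_card hPR
  have hppos : 0 < P.card := Finset.card_pos.2 ⟨_, p.left_mem⟩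
  have u1 := hcon u huR
  have v1 := hcon v hvR
  have u2 := hwheel u huR
  have v2 := hwheel v hvR
  obtain ⟨u3, u4⟩ := hdR u v p
  obtain ⟨v3, v4⟩ := hdR v u p.reverse
  rw [hsplit] at u1 v1
  have hpc : P.card ≤ C.card :=
    hmax P (hPR.trans hRS) (p.cyc_of_deg (by omega))
  -- a neighbour of `u` on the cycle
  have hux : 0 < dg G C u := by omega
  obtain ⟨x, hx⟩ := Finset.card_pos.1 hux
  obtain ⟨hxC, hux⟩ := Finset.mem_filter.1 hx
  obtain ⟨f, hf, him, h0, hc⟩ := hC.rep_at hxC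
  set c := C.card with hcdef
  have himS : ∀ I : Finset ℕ, (∀ i ∈ I, i < c) → I.image f ⊆ C := by
    intro I hI
    rw [← him]; exact Finset.image_subset_image fun i hi => Finset.mem_range.2 (hI i hi)
  -- gluing `P` with an arc of the cycle
  have hglue : ∀ (I : Finset ℕ) (j : ℕ), (∀ i ∈ I, i < c) → Pth G (f j) (f 0) (I.image f) →
      G.Adj v (f j) → P.card + I.card ≤ c := by
    intro I j hI q hvj
    have hsub := himS I hI
    have hd : Disjoint P (I.image f) :=
      Finset.disjoint_of_subset_left hPR (Finset.disjoint_of_subset_right hsub hdisj.symm)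
    have := hmax (P ∪ I.image f) (Finset.union_subset (hPR.trans hRS) (hsub.trans hCS))
      ⟨u, f 0, p.append hvj q hd, by rw [h0]; exact hux.symm⟩
    rwa [Finset.card_union_of_disjoint hd, hf.card_image hI] at this
  have hB : dg G C v = ((Finset.range c).filter fun j => G.Adj v (f j)).card := dg_eq hf him v
  set B := (Finset.range c).filter fun j => G.Adj v (f j) with hBdef
  have hpos : ∀ j ∈ B, j ≠ 0 → P.card + 1 ≤ j ∧ j + P.card + 1 ≤ c := by
    intro j hj hj0
    obtain ⟨hj1, hj2⟩ := Finset.mem_filter.1 hj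
    rw [Finset.mem_range] at hj1
    constructor
    · have := hglue (Finset.Icc j (c - 1) ∪ Finset.Icc 0 0) j
        (by intro i hi; simp only [Finset.mem_union, Finset.mem_Icc] at hi; omega)
        (hf.glue (by omega) (by omega) le_rfl (by omega) (by omega) (Or.inl ⟨rfl, rfl⟩)
          (Or.inl ⟨rfl, rfl⟩) hc) hj2
      rw [Finset.card_union_of_disjoint, Nat.card_Icc, Nat.card_Icc] at this
      · omega
      · rw [Finset.disjoint_left]; intro k hk hk'; rw [Finset.mem_Icc] at hk hk'; omega
    · have := hglue (Finset.Icc 0 j) j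
        (by intro i hi; simp only [Finset.mem_Icc] at hi; omega)
        (hf.arc (by omega) hj1).reverse hj2
      rw [Nat.card_Icc] at this
      omega
  have hcons : ∀ j, j ∈ B → j + 1 ∈ B → False := by
    intro j hj hj'
    obtain ⟨-, hj2⟩ := Finset.mem_filter.1 hj
    obtain ⟨hj3, hj4⟩ := Finset.mem_filter.1 hj'
    rw [Finset.mem_range] at hj3
    have q := hf.rotate (i := j + 1) (by omega) hj3 hc
    rw [him, Nat.add_sub_cancel] at q
    have hvC : v ∉ C := (Finset.mem_sdiff.1 hvR).2
    have := hmax (insert v C) (Finset.insert_subset (hRS hvR) hCS)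
      ⟨v, f j, Pth.cons hj4 hvC q, hj2.symm⟩
    rw [Finset.card_insert_of_notMem hvC] at this
    omega
  have hB' : 2 * (B.erase 0).card ≤ c - P.card - P.card := by
    by_contra hlt
    obtain ⟨y, hy1, hy2⟩ := pigeon (A := B.erase 0) (B := (B.erase 0).image (· + 1))
      (I := Finset.Ico (P.card + 1) (c - P.card + 1))
      (by
        intro j hj
        obtain ⟨ha, hb⟩ := Finset.mem_erase.1 hj
        have := hpos j hb ha
        rw [Finset.mem_Ico]; omega)
      (by
        intro y hy
        obtain ⟨j, hj, rfl⟩ := Finset.mem_image.1 hy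
        obtain ⟨ha, hb⟩ := Finset.mem_erase.1 hj
        have := hpos j hb ha
        rw [Finset.mem_Ico]; omega)
      (by rw [Finset.card_image_of_injective _ (add_left_injective 1), Nat.card_Ico]; omega)
    obtain ⟨j, hj, rfl⟩ := Finset.mem_image.1 hy2
    exact hcons j (Finset.mem_of_mem_erase hj) (Finset.mem_of_mem_erase hy1)
  have hRpos : 0 < R.card := Finset.card_pos.2 ⟨_, hw⟩
  by_cases h0B : 0 ∈ B
  · have e1 := Finset.card_erase_add_one h0B
    obtain ⟨-, hv0⟩ := Finset.mem_filter.1 h0B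
    have := hglue (Finset.Icc 0 0) 0
        (by intro i hi; simp only [Finset.mem_Icc] at hi; omega)
        (hf.arc le_rfl (by omega)) hv0
    rw [Nat.card_Icc] at this
    omega
  · rw [Finset.erase_eq_of_notMem h0B] at hB'
    omega

theorem main_aux (n : ℕ) : ∀ S : Finset V, S.card = n → n ^ 2 < 2 * ∑ v ∈ S, dg G S v →
    ∀ l, 3 ≤ l → ∀ T ⊆ S, Cyc G T → l ≤ T.card → ∃ T' ⊆ S, Cyc G T' ∧ T'.card = l := by
  classical
  induction n with
  | zero =>
    intro S hS _ l hl T hT _ hlT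
    have := Finset.card_le_card hT
    omega
  | succ n ih =>
    intro S hS he l hl T hT hTc hlT
    obtain ⟨C, hC, hCmax⟩ := Finset.exists_max_image (S.powerset.filter fun T => Cyc G T)
      Finset.card ⟨T, by simp only [Finset.mem_filter, Finset.mem_powerset]; exact ⟨hT, hTc⟩⟩
    simp only [Finset.mem_filter, Finset.mem_powerset] at hC hCmax
    obtain ⟨hCS, hCc⟩ := hC
    have hlC : l ≤ C.card := hlT.trans (hCmax T ⟨hT, hTc⟩)
    -- deleting a vertex of small degree that avoids a long cycle
    have hdel : ∀ v ∈ S, 2 * dg G S v ≤ n → ∀ D ⊆ S.erase v, Cyc G D → l ≤ D.card →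
        ∃ T' ⊆ S, Cyc G T' ∧ T'.card = l := by
      intro v hv hdeg D hD hDc hlD
      have h1 := sum_dg_erase (G := G) hv
      obtain ⟨T', h2, h3⟩ := ih (S.erase v) (by rw [Finset.card_erase_of_mem hv, hS]; rfl)
        (by nlinarith) l hl D hD hDc hlD
      exact ⟨T', h2.trans (Finset.erase_subset _ _), h3⟩
    by_cases hne : (S \ C).Nonempty
    · obtain ⟨v, hv, hdeg⟩ := exists_low_outside hCS hCc (hl.trans hlC)
        (fun T h1 h2 => hCmax T ⟨h1, h2⟩) hne
      obtain ⟨hvS, hvC⟩ := Finset.mem_sdiff.1 hv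
      exact hdel v hvS (by omega) C (Finset.subset_erase.2 ⟨hCS, hvC⟩) hCc hlC
    · have hSC : C = S := by
        rw [Finset.not_nonempty_iff_eq_empty, Finset.sdiff_eq_empty_iff_subset] at hne
        exact Finset.Subset.antisymm hCS hne
      subst hSC
      rcases hlC.eq_or_lt with heq | hlt
      · exact ⟨C, hCS, hCc, heq.symm⟩
      · obtain ⟨w, hw, hcyc⟩ := exists_cyc_erase hCc (by omega) (by rw [hS]; exact he)
        have hcard : (C.erase w).card = n := by rw [Finset.card_erase_of_mem hw, hS]; rfl
        by_cases hdeg : 2 * dg G C w ≤ n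
        · exact hdel w hw hdeg _ (Finset.Subset.refl _) hcyc (by omega)
        · have hdd : dg G C w = dg G (C.erase w) w := by
            unfold dg
            congr 1
            ext y
            simp only [Finset.mem_filter, Finset.mem_erase]
            constructor
            · rintro ⟨h1, h2⟩; exact ⟨⟨h2.ne.symm, h1⟩, h2⟩
            · rintro ⟨⟨_, h1⟩, h2⟩; exact ⟨h1, h2⟩
          have := wheel hcyc (Finset.notMem_erase w C) (by omega) hl (by omega)
          rwa [Finset.insert_erase hw] at this

theorem Pth.exists_walk {u v : V} {T : Finset V} (p : Pth G u v T) :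
    ∃ q : G.Walk u v, q.IsPath ∧ q.length + 1 = T.card ∧ ∀ x ∈ q.support, x ∈ T := by
  induction p with
  | single u => exact ⟨Walk.nil, by simp⟩
  | @cons w u v T hw hn p ih =>
    obtain ⟨q, hq, hl, hs⟩ := ih
    refine ⟨Walk.cons hw q, ?_, ?_, ?_⟩
    · rw [Walk.cons_isPath_iff]; exact ⟨hq, fun h => hn (hs _ h)⟩
    · rw [Finset.card_insert_of_notMem hn, Walk.length_cons, hl]
    · intro x hx
      rw [Walk.support_cons, List.mem_cons] at hx
      rcases hx with rfl | hx
      · exact Finset.mem_insert_self _ _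
      · exact Finset.mem_insert_of_mem (hs _ hx)

theorem pth_of_walk {u v : V} (q : G.Walk u v) (hq : q.IsPath) :
    ∃ T : Finset V, Pth G u v T ∧ T.card = q.length + 1 ∧ ∀ x ∈ T, x ∈ q.support := by
  induction q with
  | nil => exact ⟨_, Pth.single _, by simp, by simp⟩
  | @cons w u v h q ih =>
    rw [Walk.cons_isPath_iff] at hq
    obtain ⟨T, p, hc, hs⟩ := ih hq.1
    have hn : w ∉ T := fun h => hq.2 (hs _ h)
    refine ⟨_, Pth.cons h hn p, ?_, ?_⟩
    · rw [Finset.card_insert_of_notMem hn, hc, Walk.length_cons]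
    · intro x hx
      rw [Walk.support_cons, List.mem_cons]
      rcases Finset.mem_insert.1 hx with rfl | hx
      · exact Or.inl rfl
      · exact Or.inr (hs _ hx)

theorem Cyc.hasCycleLen {T : Finset V} (h : Cyc G T) (h3 : 3 ≤ T.card) :
    HasCycleLen G T.card := by
  obtain ⟨u, v, p, hvu⟩ := h
  obtain ⟨q, hq, hl, -⟩ := p.exists_walk
  refine ⟨v, Walk.cons hvu q, ?_, by rw [Walk.length_cons, hl]⟩
  rw [Walk.cons_isCycle_iff]
  refine ⟨hq, fun he => ?_⟩
  cases q with
  | nil => simp at hl; omega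
  | @cons _ w _ h q =>
    rw [Walk.cons_isPath_iff] at hq
    rw [Walk.edges_cons, List.mem_cons] at he
    rcases he with he | he
    · rw [Sym2.eq_swap, Sym2.eq_iff] at he
      have hwv : v = w := by
        rcases he with ⟨-, h⟩ | ⟨h1, h2⟩
        · exact h
        · exact h2.trans h1
      subst hwv
      have := (Walk.isPath_iff_nil.1 hq.1).eq_nil
      subst this
      simp at hl
      omega
    · exact hq.2 (Walk.snd_mem_support_of_mem_edges q he)

theorem HasCycleLen.exists_cyc {l : ℕ} (h : HasCycleLen G l) :
    ∃ T : Finset V, Cyc G T ∧ T.card = l := by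
  obtain ⟨v, c, hc, hl⟩ := h
  cases c with
  | nil => exact absurd hc Walk.not_isCycle_nil
  | @cons _ w _ h q =>
    rw [Walk.cons_isCycle_iff] at hc
    obtain ⟨T, p, hT, -⟩ := pth_of_walk q hc.1
    exact ⟨T, ⟨w, v, p, h⟩, by rw [hT, ← hl, Walk.length_cons]⟩

end

theorem choose_bound (k n : ℕ) (hn : 2 * k + 7 ≤ n) :
    n ^ 2 < 4 * ((n - k - 2).choose 2 + (k + 3).choose 2) := by
  obtain ⟨d, rfl⟩ := Nat.exists_eq_add_of_le hn
  rw [show 2 * k + 7 + d - k - 2 = k + d + 4 + 1 by omega, show k + 3 = k + 2 + 1 by omega]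
  have h1 := Nat.triangle_succ (k + d + 4)
  have h2 := Nat.triangle_succ (k + 2)
  have e1 : (k + d + 4 + 1).choose 2 * 2 = (k + d + 4 + 1) * (k + d + 4) := by
    rw [Nat.choose_two_right, Nat.add_sub_cancel]
    exact Nat.div_mul_cancel (by simpa using (Nat.even_mul_pred_self (k + d + 4 + 1)).two_dvd)
  have e2 : (k + 2 + 1).choose 2 * 2 = (k + 2 + 1) * (k + 2) := by
    rw [Nat.choose_two_right, Nat.add_sub_cancel]
    exact Nat.div_mul_cancel (by simpa using (Nat.even_mul_pred_self (k + 2 + 1)).two_dvd)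
  nlinarith

/-- Weak pancyclicity part of Theorem 1.4. -/
theorem weakly_pancyclic_of_many_edges' (k n : ℕ) (G : SimpleGraph (Fin n))
    (hn : 2 * k + 7 ≤ n)
    (he : (n - k - 2).choose 2 + (k + 3).choose 2 ≤ edgeCount G) :
    WeaklyPancyclic3 G := by
  classical
  have hb := choose_bound k n hn
  have hedge : edgeCount G = G.edgeFinset.card := by
    unfold edgeCount
    rw [Nat.card_eq_fintype_card, ← SimpleGraph.edgeFinset_card]
  have h4 : n ^ 2 < 4 * G.edgeFinset.card := by omega
  have hsum : ∑ v : Fin n, dg G Finset.univ v = 2 * G.edgeFinset.card := by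
    rw [← G.sum_degrees_eq_twice_card_edges]
    refine Finset.sum_congr rfl fun v _ => ?_
    unfold dg
    rw [← SimpleGraph.card_neighborFinset_eq_degree]
    congr 1
    ext w; simp
  have hmain := main_aux (G := G) n Finset.univ (by simp) (by rw [hsum]; omega)
  have key : ∀ m, HasCycleLen G m → ∀ l, 3 ≤ l → l ≤ m → HasCycleLen G l := by
    intro m hm l hl hlm
    obtain ⟨T, hT, hTm⟩ := hm.exists_cyc
    obtain ⟨T', -, hT', rfl⟩ := hmain l hl T (Finset.subset_univ _) hT (by omega)
    exact hT'.hasCycleLen hl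
  -- a triangle, by Mantel's theorem
  have htri : HasCycleLen G 3 := by
    by_contra hno
    have hcf : G.CliqueFree (2 + 1) := by
      intro s hs
      obtain ⟨a, b, c, hab, hac, hbc, rfl⟩ := SimpleGraph.is3Clique_iff.1 hs
      apply hno
      have p : Pth G a c (insert a (insert b {c})) :=
        Pth.cons hab (by simp [hab.ne, hac.ne]) (Pth.cons hbc (by simp [hbc.ne]) (Pth.single c))
      have hcyc : Cyc G (insert a (insert b {c})) := ⟨a, c, p, hac.symm⟩
      have hcd : (insert a (insert b ({c} : Finset (Fin n)))).card = 3 := hs.card_eq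
      have := hcyc.hasCycleLen hcd.ge
      rwa [hcd] at this
    have hle := hcf.card_edgeFinset_le
    simp only [Fintype.card_fin] at hle
    rcases Nat.mod_two_eq_zero_or_one n with h | h <;> rw [h] at hle <;>
      norm_num at hle <;> omega
  refine ⟨htri, fun l hl hlc => ?_⟩
  have hbdd : BddAbove {l | HasCycleLen G l} := by
    refine ⟨n, fun l hl => ?_⟩
    obtain ⟨T, -, hT⟩ := HasCycleLen.exists_cyc hl
    have := Finset.card_le_univ T
    rw [Fintype.card_fin] at this
    omega
  have hmem : circumference G ∈ {l | HasCycleLen G l} := Nat.sSup_mem ⟨3, htri⟩ hbdd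
  exact key _ hmem l hl hlc
end

section
/- Let k ≥ 1 be an integer and let G be a simple graph of order n ≥ max{6k+11, (k+3)(k+4)/2}. If ρ(G) ≥ ρ(L_{n,k}), then G contains a cycle C_ℓ for every integer ℓ with 3 ≤ ℓ ≤ n−k+1, unless G is isomorphic to L_{n,k}. -/
open SimpleGraph

/-- A cycle of length `m` given as a sequence of vertices. -/
def LC {V : Type} (G : SimpleGraph V) (m : ℕ) (f : ℕ → V) : Prop :=
  (∀ i < m, ∀ j < m, f i = f j → i = j) ∧ (∀ i, i + 1 < m → G.Adj (f i) (f (i + 1))) ∧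
    G.Adj (f (m - 1)) (f 0)

lemma LC.hasCycle {V : Type} {G : SimpleGraph V} {m : ℕ} {f : ℕ → V} (h : LC G m f)
    (hm : 3 ≤ m) : HasCycleLen G m := by
  obtain ⟨hinj, hadj, hcl⟩ := h
  refine (cycleGraph_isContained_iff (by omega)).1 ⟨⟨⟨fun i => f i.val, ?_⟩, ?_⟩⟩
  · intro a b hab
    have key : ∀ a b : Fin m, (a - b).val = 1 → G.Adj (f b.val) (f a.val) := by
      intro a b hab
      have ha := a.2
      have hb := b.2
      rcases le_or_gt b.val a.val with hle | hlt
      · rw [Fin.sub_val_of_le (by exact hle)] at hab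
        have : a.val = b.val + 1 := by omega
        rw [this]
        exact hadj _ (by omega)
      · rw [Fin.coe_sub_iff_lt.mpr (by exact hlt)] at hab
        have h1 : b.val = m - 1 := by omega
        have h2 : a.val = 0 := by omega
        rw [h1, h2]
        exact hcl
    rcases cycleGraph_adj'.1 hab with h | h
    · exact (key a b h).symm
    · exact key b a h
  · intro a b hab
    exact Fin.ext (hinj _ a.2 _ b.2 hab)

/-- Rotation of a cycle. -/
lemma LC.rotate {V : Type} {G : SimpleGraph V} {m : ℕ} {f : ℕ → V} (h : LC G m f)
    (s : ℕ) (hs : s < m) :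
    LC G m (fun t => if t + s < m then f (t + s) else f (t + s - m)) := by
  obtain ⟨hinj, hadj, hcl⟩ := h
  refine ⟨?_, ?_, ?_⟩
  · intro i hi j hj hij
    dsimp only at hij
    split_ifs at hij with h1 h2 h2
    · have := hinj _ h1 _ h2 hij; omega
    · have := hinj _ h1 _ (by omega) hij; omega
    · have := hinj _ (by omega) _ h2 hij; omega
    · have := hinj _ (by omega) _ (by omega) hij; omega
  · intro i hi
    dsimp only
    split_ifs with h1 h2 h2
    · have := hadj (i + s) (by omega)
      rwa [show i + s + 1 = i + 1 + s by omega] at this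
    · rw [show i + s = m - 1 by omega, show i + 1 + s - m = 0 by omega]
      exact hcl
    · omega
    · have := hadj (i + s - m) (by omega)
      rwa [show i + s - m + 1 = i + 1 + s - m by omega] at this
  · dsimp only
    split_ifs with h1 h2 h2
    · have : s = 0 := by omega
      subst this
      simpa using hcl
    · omega
    · have := hadj (m - 1 + s - m) (by omega)
      rwa [show m - 1 + s - m + 1 = 0 + s by omega] at this
    · omega

/-- Reversal of a cycle. -/
lemma LC.reverse {V : Type} {G : SimpleGraph V} {m : ℕ} {f : ℕ → V} (h : LC G m f) :
    LC G m (fun t => f (m - 1 - t)) := by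
  obtain ⟨hinj, hadj, hcl⟩ := h
  refine ⟨?_, ?_, ?_⟩
  · intro i hi j hj hij
    have := hinj _ (by omega) _ (by omega) hij
    omega
  · intro i hi
    have := hadj (m - 1 - (i + 1)) (by omega)
    rw [show m - 1 - (i + 1) + 1 = m - 1 - i by omega] at this
    exact this.symm
  · simpa using hcl.symm

/-- A Hamiltonian path `f 0, …, f (p-1)` with a crossing pair yields a Hamiltonian cycle. -/
lemma crossing {V : Type} {G : SimpleGraph V} {p : ℕ} {f : ℕ → V}
    (hinj : ∀ i < p, ∀ j < p, f i = f j → i = j)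
    (hadj : ∀ i, i + 1 < p → G.Adj (f i) (f (i + 1)))
    (i : ℕ) (hi : i + 1 < p) (h1 : G.Adj (f 0) (f (i + 1))) (h2 : G.Adj (f (p - 1)) (f i)) :
    ∃ g, LC G p g := by
  refine ⟨fun t => if t ≤ i then f t else f (p + i - t), ?_, ?_, ?_⟩
  · intro a ha b hb hab
    dsimp only at hab
    split_ifs at hab with h3 h4 h4
    · exact hinj _ ha _ hb hab
    · have := hinj _ ha _ (by omega) hab; omega
    · have := hinj _ (by omega) _ hb hab; omega
    · have := hinj _ (by omega) _ (by omega) hab; omega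
  · intro a ha
    dsimp only
    split_ifs with h3 h4 h4
    · exact hadj a ha
    · have : a = i := by omega
      subst this
      rw [show p + a - (a + 1) = p - 1 by omega]
      exact h2.symm
    · omega
    · have := hadj (p + i - (a + 1)) (by omega)
      rw [show p + i - (a + 1) + 1 = p + i - a by omega] at this
      exact this.symm
  · dsimp only
    rw [if_neg (by omega), if_pos (by omega), show p + i - (p - 1) = i + 1 by omega]
    exact h1.symm

open Classical in
/-- Number of neighbours of `v` inside `S`. -/
noncomputable def dS {V : Type} (G : SimpleGraph V) (S : Finset V) (v : V) : ℕ :=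
  (S.filter (fun w => G.Adj v w)).card

/-- Degree sum of the graph induced on `S`. -/
noncomputable def D2 {V : Type} (G : SimpleGraph V) (S : Finset V) : ℕ :=
  ∑ v ∈ S, dS G S v

open Finset

/-- Bondy: a Hamiltonian graph in which two consecutive vertices on the cycle have large degree
sum contains cycles of all lengths. -/
lemma pancyc_aux {V : Type} [Fintype V] (G : SimpleGraph V) (p : ℕ) (hp : Fintype.card V = p)
    (f : ℕ → V) (hf : LC G p f)
    (hd : p < dS G univ (f 0) + dS G univ (f (p - 1))) (l : ℕ) (hl : 3 ≤ l) (hlp : l ≤ p) :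
    ∃ g, LC G l g := by
  classical
  obtain ⟨hinj, hadj, hcl⟩ := hf
  have hsurj : ∀ v, ∃ i < p, f i = v := by
    have hc : ((range p).image f) = univ := by
      apply Finset.eq_univ_of_card
      rw [Finset.card_image_of_injOn, card_range, hp]
      intro i hi j hj hij
      exact hinj i (by simpa using hi) j (by simpa using hj) hij
    intro v
    have : v ∈ (range p).image f := by rw [hc]; simp
    obtain ⟨i, hi, rfl⟩ := Finset.mem_image.1 this
    exact ⟨i, by simpa using hi, rfl⟩
  by_contra hno
  -- index sets
  set A := (Ico 1 (p - 1)).filter (fun j => G.Adj (f 0) (f j)) with hA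
  set B := (Ico 1 (p - 1)).filter (fun j => G.Adj (f (p - 1)) (f j)) with hB
  have hAc : dS G univ (f 0) ≤ A.card + 1 := by
    have : univ.filter (fun w => G.Adj (f 0) w) ⊆ insert (f (p - 1)) (A.image f) := by
      intro w hw
      simp only [mem_filter, mem_univ, true_and] at hw
      obtain ⟨i, hi, rfl⟩ := hsurj w
      simp only [mem_insert, mem_image]
      rcases Nat.lt_or_ge i (p - 1) with h | h
      · right
        refine ⟨i, ?_, rfl⟩
        rw [hA, mem_filter, mem_Ico]
        refine ⟨⟨?_, h⟩, hw⟩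
        rcases Nat.eq_zero_or_pos i with h0 | h0
        · subst h0; exact absurd hw (G.irrefl)
        · exact h0
      · left; congr 1; omega
    calc dS G univ (f 0) ≤ _ := card_le_card this
      _ ≤ _ := card_insert_le _ _
      _ ≤ _ := by gcongr; exact card_image_le
  have hBc : dS G univ (f (p - 1)) ≤ B.card + 1 := by
    have : univ.filter (fun w => G.Adj (f (p - 1)) w) ⊆ insert (f 0) (B.image f) := by
      intro w hw
      simp only [mem_filter, mem_univ, true_and] at hw
      obtain ⟨i, hi, rfl⟩ := hsurj w
      simp only [mem_insert, mem_image]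
      rcases Nat.eq_zero_or_pos i with h0 | h0
      · left; rw [h0]
      · right
        refine ⟨i, ?_, rfl⟩
        rw [hB, mem_filter, mem_Ico]
        refine ⟨⟨h0, ?_⟩, hw⟩
        by_contra h
        have : i = p - 1 := by omega
        subst this; exact absurd hw (G.irrefl)
    calc dS G univ (f (p - 1)) ≤ _ := card_le_card this
      _ ≤ _ := card_insert_le _ _
      _ ≤ _ := by gcongr; exact card_image_le
  set φ : ℕ → ℕ := fun j => if j + l ≤ p + 1 then j + l - 3 else j + l - 1 - p with hφ
  have hφinj : Set.InjOn φ (A : Set ℕ) := by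
    intro a ha b hb hab
    have ha' := (mem_Ico.1 (mem_filter.1 (mem_coe.1 ha)).1)
    have hb' := (mem_Ico.1 (mem_filter.1 (mem_coe.1 hb)).1)
    simp only [hφ] at hab
    split_ifs at hab <;> omega
  have hdisj : Disjoint (A.image φ) B := by
    rw [Finset.disjoint_left]
    intro x hx hxB
    obtain ⟨j, hj, rfl⟩ := mem_image.1 hx
    obtain ⟨hj1, hj2⟩ := mem_filter.1 hj
    obtain ⟨-, hx2⟩ := mem_filter.1 hxB
    rw [mem_Ico] at hj1
    apply hno
    simp only [hφ] at hx2
    split_ifs at hx2 with hc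
    · -- f 0, f j, ..., f (j + l - 3), f (p-1)
      refine ⟨fun t => if t = 0 then f 0 else if t = l - 1 then f (p - 1) else f (j + t - 1),
        ?_, ?_, ?_⟩
      · intro a ha b hb hab
        dsimp only at hab
        split_ifs at hab <;> first
          | omega
          | (have := hinj _ (by omega) _ (by omega) hab; omega)
      · intro a ha
        dsimp only
        rw [if_neg (show ¬ (a + 1 = 0) by omega)]
        split_ifs with h1 h2 h2 h3
        · omega
        · subst h1; simpa using hj2
        · omega
        · omega
        · rw [show j + a - 1 = j + l - 3 by omega]; exact hx2.symm
        · have := hadj (j + a - 1) (by omega)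
          rwa [show j + a - 1 + 1 = j + (a + 1) - 1 by omega] at this
      · simp only [if_true]
        rw [if_neg (by omega)]
        exact hcl
    · -- f 0, ..., f (j'), f (p-1), f (p-2), ..., f j
      refine ⟨fun t => if t ≤ j + l - 1 - p then f t else f (j + l - 1 - t), ?_, ?_, ?_⟩
      · intro a ha b hb hab
        dsimp only at hab
        split_ifs at hab <;> first
          | omega
          | (have := hinj _ (by omega) _ (by omega) hab; omega)
      · intro a ha
        dsimp only
        split_ifs with h1 h2 h2
        · exact hadj a (by omega)
        · rw [show j + l - 1 - (a + 1) = p - 1 by omega, show a = j + l - 1 - p by omega]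
          exact hx2.symm
        · omega
        · have := hadj (j + l - 1 - (a + 1)) (by omega)
          rw [show j + l - 1 - (a + 1) + 1 = j + l - 1 - a by omega] at this
          exact this.symm
      · dsimp only
        rw [if_neg (by omega), if_pos (by omega), show j + l - 1 - (l - 1) = j by omega]
        exact hj2.symm
  have hsub : A.image φ ∪ B ⊆ Ico 1 (p - 1) := by
    intro x hx
    rcases mem_union.1 hx with h | h
    · obtain ⟨j, hj, rfl⟩ := mem_image.1 h
      have hj1 := mem_Ico.1 (mem_filter.1 hj).1
      simp only [hφ]
      rw [mem_Ico]
      split_ifs <;> omega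
    · exact (mem_filter.1 h).1
  have := card_le_card hsub
  rw [card_union_of_disjoint hdisj, card_image_of_injOn hφinj, Nat.card_Ico] at this
  omega

lemma pancyc {V : Type} [Fintype V] (G : SimpleGraph V) (p : ℕ) (hp : Fintype.card V = p)
    (f : ℕ → V) (hf : LC G p f)
    (hD : p * p < 2 * D2 G univ) (l : ℕ) (hl : 3 ≤ l) (hlp : l ≤ p) :
    ∃ g, LC G l g := by
  classical
  have hf' := hf
  obtain ⟨hinj, hadj, hcl⟩ := hf'
  have himg : ((range p).image f) = univ := by
    apply Finset.eq_univ_of_card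
    rw [Finset.card_image_of_injOn, card_range, hp]
    intro i hi j hj hij
    exact hinj i (by simpa using hi) j (by simpa using hj) hij
  set a : ℕ → ℕ := fun i => dS G univ (f i) with ha
  have hsum : D2 G univ = ∑ i ∈ range p, a i := by
    rw [D2, ← himg, Finset.sum_image, himg]
    intro i hi j hj hij
    exact hinj i (by simpa using hi) j (by simpa using hj) hij
  have hp1 : p = (p - 1) + 1 := by omega
  have : ∃ s < p, p < (if s + 1 < p then a (s + 1) else a 0) + a s := by
    by_contra hcon
    push Not at hcon
    have h1 : ∑ s ∈ range p, ((if s + 1 < p then a (s + 1) else a 0) + a s) ≤ p * p := by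
      calc _ ≤ ∑ s ∈ range p, p := sum_le_sum (fun s hs => hcon s (by simpa using hs))
        _ = _ := by simp
    rw [sum_add_distrib] at h1
    have h2 : ∑ s ∈ range p, (if s + 1 < p then a (s + 1) else a 0) = ∑ s ∈ range p, a s := by
      rw [hp1, sum_range_succ, sum_range_succ']
      congr 1
      · apply sum_congr rfl
        intro s hs
        rw [mem_range] at hs
        rw [if_pos (by omega)]
      · rw [if_neg (by omega)]
    rw [h2] at h1
    omega
  obtain ⟨s, hs, hbig⟩ := this
  by_cases h : s + 1 < p
  · rw [if_pos h] at hbig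
    refine pancyc_aux G p hp _ (hf.rotate (s + 1) h) ?_ l hl hlp
    simp only [zero_add]
    rw [if_pos h, if_neg (by omega), show p - 1 + (s + 1) - p = s by omega]
    exact hbig
  · rw [if_neg h] at hbig
    refine pancyc_aux G p hp f hf ?_ l hl hlp
    rw [show p - 1 = s by omega]
    exact hbig

lemma dS_union {V : Type} [DecidableEq V] (G : SimpleGraph V) (A B : Finset V)
    (h : Disjoint A B) (v : V) : dS G (A ∪ B) v = dS G A v + dS G B v := by
  classical
  unfold dS
  rw [filter_union, card_union_of_disjoint (disjoint_filter_filter h)]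

lemma dS_mono {V : Type} {G H : SimpleGraph V} (hGH : G ≤ H) {A B : Finset V} (h : A ⊆ B) (v : V) :
    dS G A v ≤ dS H B v := by
  classical
  unfold dS
  apply card_le_card
  intro x hx
  rw [mem_filter] at hx ⊢
  exact ⟨h hx.1, hGH hx.2⟩

lemma dS_comm {V : Type} (G : SimpleGraph V) (A B : Finset V) :
    ∑ x ∈ A, dS G B x = ∑ y ∈ B, dS G A y := by
  classical
  have := Finset.sum_card_bipartiteAbove_eq_sum_card_bipartiteBelow (s := A) (t := B)
    (fun x y => G.Adj x y)
  unfold bipartiteAbove bipartiteBelow at this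
  unfold dS
  rw [this]
  apply sum_congr rfl
  intro y _
  congr 1
  ext x
  simp only [mem_filter, G.adj_comm x y]

lemma dS_le_card {V : Type} (G : SimpleGraph V) (A : Finset V) (v : V) : dS G A v ≤ A.card := by
  classical
  exact card_filter_le _ _

lemma dS_le_of_mem {V : Type} (G : SimpleGraph V) (A : Finset V) (v : V) (hv : v ∈ A) :
    dS G A v + 1 ≤ A.card := by
  classical
  have : A.filter (fun w => G.Adj v w) ⊆ A.erase v := by
    intro x hx
    rw [mem_filter] at hx
    exact mem_erase.2 ⟨fun h => G.irrefl (h ▸ hx.2), hx.1⟩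
  have h1 := card_le_card this
  have h2 := card_erase_add_one hv
  unfold dS
  omega

lemma dS_singleton_self {V : Type} (G : SimpleGraph V) (v : V) : dS G {v} v = 0 := by
  have := dS_le_of_mem G {v} v (by simp)
  simpa using this

lemma D2_le {V : Type} (G : SimpleGraph V) (A : Finset V) : D2 G A ≤ A.card * (A.card - 1) := by
  unfold D2
  calc _ ≤ ∑ v ∈ A, (A.card - 1) := sum_le_sum (fun v hv => by
        have := dS_le_of_mem G A v hv; omega)
    _ = _ := by simp

lemma D2_union {V : Type} [DecidableEq V] (G : SimpleGraph V) (A B : Finset V)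
    (h : Disjoint A B) : D2 G (A ∪ B) = D2 G A + D2 G B + 2 * ∑ x ∈ B, dS G A x := by
  unfold D2
  rw [sum_union h]
  simp only [dS_union G A B h, sum_add_distrib]
  rw [dS_comm G A B]
  ring

lemma D2_mono {V : Type} {G H : SimpleGraph V} (hGH : G ≤ H) (A : Finset V) :
    D2 G A ≤ D2 H A :=
  sum_le_sum (fun v _ => dS_mono hGH (Subset.refl _) v)

lemma D2_insert {V : Type} [DecidableEq V] (G : SimpleGraph V) (A : Finset V) (v : V)
    (h : v ∉ A) : D2 G (insert v A) = D2 G A + 2 * dS G A v := by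
  have := D2_union G A {v} (by simpa using h)
  rw [union_comm, ← insert_eq] at this
  rw [this]
  simp [D2, dS_singleton_self]

/-- Degree-sum bound in presence of many vertices of small degree. -/
lemma D2_small {V : Type} [DecidableEq V] (G : SimpleGraph V) (A J : Finset V) (hJA : J ⊆ A)
    (m : ℕ) (hJ : ∀ x ∈ J, dS G A x ≤ m) :
    D2 G A ≤ (A.card - J.card) * (A.card - J.card - 1) + 2 * (J.card * m) := by
  have hun : (A \ J) ∪ J = A := sdiff_union_of_subset hJA
  have hdis : Disjoint (A \ J) J := sdiff_disjoint
  have h := D2_union G (A \ J) J hdis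
  rw [hun] at h
  have h1 := D2_le G (A \ J)
  rw [card_sdiff_of_subset hJA] at h1
  have h2 : D2 G J + 2 * ∑ x ∈ J, dS G (A \ J) x ≤ 2 * (J.card * m) := by
    have : D2 G J + ∑ x ∈ J, dS G (A \ J) x ≤ J.card * m := by
      unfold D2
      rw [← sum_add_distrib]
      calc _ ≤ ∑ x ∈ J, m := sum_le_sum (fun x hx => by
            have := dS_union G _ _ hdis x
            rw [hun] at this
            have := hJ x hx
            omega)
        _ = _ := by simp
    omega
  omega

/-- Pósa's theorem, counting version. -/
lemma posa {V : Type} [Fintype V] (G : SimpleGraph V) (p : ℕ) (hp : Fintype.card V = p)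
    (hp3 : 3 ≤ p) (δ : ℕ) (hδ : ∀ v, δ ≤ dS G univ v) (hno : ¬ ∃ f, LC G p f) :
    ∃ j, δ ≤ j ∧ 2 * j + 1 ≤ p ∧ D2 G univ ≤ (p - j) * (p - j - 1) + 2 * (j * j) := by
  classical
  obtain ⟨H, hGH, hmax⟩ := Finite.exists_le_maximal
    (p := fun H : SimpleGraph V => ¬ ∃ f, LC H p f) hno
  have hHno := hmax.prop
  -- a nonadjacent pair
  have hex : ∃ u v, u ≠ v ∧ ¬ H.Adj u v := by
    by_contra hcon
    push Not at hcon
    apply hHno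
    let e := Fintype.equivFinOfCardEq hp
    refine ⟨fun i => e.symm ⟨i % p, Nat.mod_lt _ (by omega)⟩, ?_, ?_, ?_⟩
    · intro i hi j hj hij
      have := e.symm.injective hij
      rw [Fin.mk.injEq, Nat.mod_eq_of_lt hi, Nat.mod_eq_of_lt hj] at this
      exact this
    · intro i hi
      apply hcon
      intro h
      have := e.symm.injective h
      rw [Fin.mk.injEq, Nat.mod_eq_of_lt hi, Nat.mod_eq_of_lt (by omega)] at this
      omega
    · apply hcon
      intro h
      have := e.symm.injective h
      rw [Fin.mk.injEq, Nat.mod_eq_of_lt (by omega), Nat.mod_eq_of_lt (by omega)] at this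
      omega
  let d : V → ℕ := fun v => dS H univ v
  have hex2 : ∃ u v, u ≠ v ∧ ¬ H.Adj u v ∧ (∀ a b, a ≠ b → ¬ H.Adj a b → d a + d b ≤ d u + d v) ∧
      d u ≤ d v := by
    obtain ⟨u, v, huv, hadj⟩ := hex
    obtain ⟨⟨a, b⟩, hab, hm⟩ := Finset.exists_max_image
      ((univ : Finset (V × V)).filter (fun q => q.1 ≠ q.2 ∧ ¬ H.Adj q.1 q.2))
      (fun q => d q.1 + d q.2) ⟨(u, v), by simp [huv, hadj]⟩
    simp only [mem_filter, mem_univ, true_and, Prod.forall] at hab hm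
    rcases le_total (d a) (d b) with h | h
    · exact ⟨a, b, hab.1, hab.2, fun x y h1 h2 => hm x y ⟨h1, h2⟩, h⟩
    · refine ⟨b, a, hab.1.symm, fun h => hab.2 h.symm, fun x y h1 h2 => ?_, h⟩
      have := hm x y ⟨h1, h2⟩
      omega
  obtain ⟨u, v, huv, hnadj, hmaxd, hle⟩ := hex2
  -- Hamiltonian path from u to v in H
  have hpath : ∃ g : ℕ → V, (∀ i < p, ∀ j < p, g i = g j → i = j) ∧
      (∀ i, i + 1 < p → H.Adj (g i) (g (i + 1))) ∧ g 0 = u ∧ g (p - 1) = v := by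
    let H' : SimpleGraph V := H ⊔ SimpleGraph.edge u v
    have hadj' : ∀ a b, H'.Adj a b ↔ H.Adj a b ∨ (a = u ∧ b = v) ∨ (a = v ∧ b = u) := by
      intro a b
      simp only [H', SimpleGraph.sup_adj, SimpleGraph.edge_adj]
      constructor
      · rintro (h | ⟨h | h, -⟩)
        · exact Or.inl h
        · right; tauto
        · right; tauto
      · rintro (h | h | h)
        · exact Or.inl h
        · right; obtain ⟨rfl, rfl⟩ := h; exact ⟨by tauto, huv⟩
        · right; obtain ⟨rfl, rfl⟩ := h; exact ⟨by tauto, huv.symm⟩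
    have hHH' : H ≤ H' := le_sup_left
    have hham : ∃ f, LC H' p f := by
      by_contra hc
      have := hmax.le_of_ge hc hHH'
      exact hnadj (this ((hadj' u v).2 (by tauto)))
    have h1 : ∃ f, LC H' p f ∧ ¬ H.Adj (f (p - 1)) (f 0) := by
      obtain ⟨f, hf⟩ := hham
      by_cases hc : ∃ i, i + 1 < p ∧ ¬ H.Adj (f i) (f (i + 1))
      · obtain ⟨i, hi, hi2⟩ := hc
        refine ⟨_, hf.rotate (i + 1) hi, ?_⟩
        simp only [zero_add]
        rw [if_pos hi, if_neg (by omega), show p - 1 + (i + 1) - p = i by omega]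
        exact hi2
      · push Not at hc
        refine ⟨f, hf, fun h => hHno ⟨f, hf.1, hc, h⟩⟩
    have h2 : ∃ f, LC H' p f ∧ f 0 = u ∧ f (p - 1) = v := by
      obtain ⟨f, hf, hn⟩ := h1
      rcases (hadj' _ _).1 hf.2.2 with h | h | h
      · exact absurd h hn
      · refine ⟨_, hf.reverse, ?_⟩
        simp [h.1, h.2]
      · exact ⟨f, hf, h.2, h.1⟩
    obtain ⟨f, hf, hf0, hf1⟩ := h2
    refine ⟨f, hf.1, ?_, hf0, hf1⟩
    intro i hi
    rcases (hadj' _ _).1 (hf.2.1 i hi) with h | h | h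
    · exact h
    · have a1 := hf.1 i (by omega) 0 (by omega) (by rw [h.1, hf0])
      have a2 := hf.1 (i + 1) (by omega) (p - 1) (by omega) (by rw [h.2, hf1])
      omega
    · have a1 := hf.1 i (by omega) (p - 1) (by omega) (by rw [h.1, hf1])
      omega
  obtain ⟨g, ginj, gadj, g0, g1⟩ := hpath
  have hcross : ∀ i, i + 1 < p → H.Adj u (g (i + 1)) → ¬ H.Adj v (g i) := by
    intro i hi h1 h2
    exact hHno (crossing ginj gadj i hi (g0 ▸ h1) (g1 ▸ h2))
  have hsurj : ∀ v, ∃ i < p, g i = v := by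
    have hc : ((range p).image g) = univ := by
      apply Finset.eq_univ_of_card
      rw [Finset.card_image_of_injOn, card_range, hp]
      intro i hi j hj hij
      exact ginj i (by simpa using hi) j (by simpa using hj) hij
    intro v
    have : v ∈ (range p).image g := by rw [hc]; simp
    obtain ⟨i, hi, rfl⟩ := Finset.mem_image.1 this
    exact ⟨i, by simpa using hi, rfl⟩
  set I := (range (p - 1)).filter (fun i => H.Adj u (g (i + 1))) with hI
  have hIlt : ∀ i ∈ I, i + 1 < p ∧ H.Adj u (g (i + 1)) := by
    intro i hi
    rw [hI, mem_filter, mem_range] at hi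
    exact ⟨by omega, hi.2⟩
  have hIcard : I.card = d u := by
    have : univ.filter (fun w => H.Adj u w) = I.image (fun i => g (i + 1)) := by
      ext w
      simp only [mem_filter, mem_univ, true_and, mem_image]
      constructor
      · intro hw
        obtain ⟨i, hi, rfl⟩ := hsurj w
        have : i ≠ 0 := by
          rintro rfl
          rw [g0] at hw
          exact H.irrefl hw
        refine ⟨i - 1, ?_, by congr 1; omega⟩
        rw [hI, mem_filter, mem_range, show i - 1 + 1 = i by omega]
        exact ⟨by omega, hw⟩
      · rintro ⟨i, hi, rfl⟩
        exact (hIlt i hi).2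
    change _ = (univ.filter (fun w => H.Adj u w)).card
    rw [this, card_image_of_injOn]
    intro a ha b hb hab
    have := ginj _ (hIlt a ha).1 _ (hIlt b hb).1 hab
    omega
  have hJcard : (I.image g).card = d u := by
    rw [← hIcard, card_image_of_injOn]
    intro a ha b hb hab
    have h1 := (hIlt a ha).1
    have h2 := (hIlt b hb).1
    exact ginj _ (by omega) _ (by omega) hab
  have hJ : ∀ x ∈ I.image g, x ≠ v ∧ ¬ H.Adj v x := by
    intro x hx
    obtain ⟨i, hi, rfl⟩ := mem_image.1 hx
    obtain ⟨h1, h2⟩ := hIlt i hi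
    refine ⟨?_, hcross i h1 h2⟩
    rw [← g1]
    intro h
    have := ginj _ (by omega) _ (by omega) h
    omega
  have hJd : ∀ x ∈ I.image g, d x ≤ d u := by
    intro x hx
    obtain ⟨h1, h2⟩ := hJ x hx
    have := hmaxd x v h1 (fun h => h2 h.symm)
    omega
  refine ⟨d u, (hδ u).trans (dS_mono hGH (Subset.refl _) u), ?_, ?_⟩
  · have hsub : univ.filter (fun w => H.Adj v w) ⊆ univ \ insert v (I.image g) := by
      intro w hw
      simp only [mem_filter, mem_univ, true_and] at hw
      simp only [mem_sdiff, mem_univ, true_and, mem_insert, not_or]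
      refine ⟨fun h => H.irrefl (h ▸ hw), fun h => (hJ w h).2 hw⟩
    have h1 := card_le_card hsub
    rw [card_sdiff_of_subset (subset_univ _), card_insert_of_notMem (fun h => (hJ v h).1 rfl), hJcard,
      card_univ, hp] at h1
    change d v ≤ _ at h1
    have : d u + 1 ≤ p := by
      have := dS_le_of_mem H univ u (mem_univ u)
      rw [card_univ, hp] at this
      exact this
    omega
  · have h1 := D2_small H univ (I.image g) (subset_univ _) (d u) hJd
    rw [hJcard, card_univ, hp] at h1
    exact (D2_mono hGH univ).trans h1

/-- Pósa and Bondy combined, for a vertex subset. -/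
lemma cycles_of_subset {V : Type} (G : SimpleGraph V) (S : Finset V) (p : ℕ)
    (hp : S.card = p) (hp3 : 3 ≤ p) (δ : ℕ) (hδ : ∀ v ∈ S, δ ≤ dS G S v)
    (hpos : ∀ j, δ ≤ j → 2 * j + 1 ≤ p → (p - j) * (p - j - 1) + 2 * (j * j) < D2 G S)
    (hD : p * p < 2 * D2 G S) (l : ℕ) (hl : 3 ≤ l) (hlp : l ≤ p) : HasCycleLen G l := by
  classical
  let G' : SimpleGraph S := G.comap Subtype.val
  have hd : ∀ v : S, dS G' univ v = dS G S v.val := by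
    intro v
    unfold dS
    apply card_bij (fun (a : S) _ => a.val)
    · intro a ha
      simp only [mem_filter, mem_univ, true_and] at ha
      exact mem_filter.2 ⟨a.2, ha⟩
    · intro a _ b _ h
      exact Subtype.ext h
    · intro b hb
      rw [mem_filter] at hb
      exact ⟨⟨b, hb.1⟩, by simpa [G'] using hb.2, rfl⟩
  have hDD : D2 G' univ = D2 G S := by
    unfold D2
    simp only [hd]
    exact Finset.sum_coe_sort S (fun v => dS G S v)
  have hcard : Fintype.card S = p := by simpa using hp
  have hham : ∃ f, LC G' p f := by
    by_contra hno
    obtain ⟨j, h1, h2, h3⟩ := posa G' p hcard hp3 δ (fun v => by rw [hd]; exact hδ _ v.2) hno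
    have := hpos j h1 h2
    omega
  obtain ⟨f, hf⟩ := hham
  obtain ⟨g, hg⟩ := pancyc G' p hcard f hf (by rw [hDD]; exact hD) l hl hlp
  have : LC G l (fun i => (g i).val) :=
    ⟨fun i hi j hj h => hg.1 i hi j hj (Subtype.ext h), fun i hi => hg.2.1 i hi, hg.2.2⟩
  exact this.hasCycle hl

lemma interp (F : ℝ → ℝ) (A B h j : ℝ) (hF : ∀ x, F x = -3 * x ^ 2 + A * x + B)
    (h4 : 4 < h) (hj : 2 ≤ j) (hjh : 2 * j ≤ h) (F2 : 0 < F 2) (Fh : 0 < F (h / 2)) :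
    0 < F j := by
  have hid : (h - 4) * F j = (h - 2 * j) * F 2 + 2 * (j - 2) * F (h / 2)
      + (h - 4) * (3 / 2) * ((j - 2) * (h - 2 * j)) := by
    simp only [hF]; ring
  have h5 : 0 < (h - 4) * F j := by
    rw [hid]
    have e1 : 0 ≤ (h - 4) * (3 / 2) * ((j - 2) * (h - 2 * j)) := by
      apply mul_nonneg
      · linarith
      · apply mul_nonneg <;> linarith
    have e2 : 0 ≤ (h - 2 * j) * F 2 := mul_nonneg (by linarith) F2.le
    have e3 : 0 ≤ 2 * (j - 2) * F (h / 2) := mul_nonneg (by linarith) Fh.le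
    rcases hj.lt_or_eq with hlt | heq
    · have : 0 < 2 * (j - 2) * F (h / 2) := mul_pos (by linarith) Fh
      linarith
    · have : 0 < (h - 2 * j) * F 2 := mul_pos (by linarith) F2
      linarith
  exact pos_of_mul_pos_right h5 (by linarith)

lemma num1 (a k t j b : ℕ) (htk : t + 1 ≤ k) (h1 : 5 * k + 11 ≤ a + 1)
    (h2 : k * k + 5 * k + 12 ≤ 2 * (a + 1)) (hb : a + 1 = b + j) (hj : 2 ≤ j) (hjb : j ≤ b) :
    (b + 1) * b + 2 * (j * j) + t * t + 2 * (t * j) < a * a + a + 1 := by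
  have hR1 : (5 : ℝ) * k + 11 ≤ a + 1 := by exact_mod_cast h1
  have hR2 : (k : ℝ) * k + 5 * k + 12 ≤ 2 * (a + 1) := by exact_mod_cast h2
  have hRt : (t : ℝ) + 1 ≤ k := by exact_mod_cast htk
  have hRb : (a : ℝ) + 1 = b + j := by exact_mod_cast hb
  have hRj : (2 : ℝ) ≤ j := by exact_mod_cast hj
  have hRjb : (j : ℝ) ≤ b := by exact_mod_cast hjb
  have ht0 : (0 : ℝ) ≤ t := by positivity
  have hmain := interp (fun x => -3 * x ^ 2 + (2 * ((a : ℝ) + 1) + 1 - 2 * t) * x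
    + (1 - 2 * ((a : ℝ) + 1) - t * t)) _ _ ((a : ℝ) + 1) j (fun x => rfl) (by linarith) hRj
    (by linarith) (by nlinarith) (by
      set H := (a : ℝ) + 1 with hH
      have h6 : 5 * (t : ℝ) ≤ H - 16 := by linarith
      have h7 : 5 * (t : ℝ) * H ≤ (H - 16) * H := mul_le_mul_of_nonneg_right h6 (by linarith)
      have h8 : (5 * (t : ℝ)) * (5 * t) ≤ (H - 16) * (H - 16) :=
        mul_le_mul h6 h6 (by linarith) (by linarith)
      nlinarith)
  have hbv : (b : ℝ) = a + 1 - j := by linarith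
  have : ((b : ℝ) + 1) * b + 2 * (j * j) + t * t + 2 * (t * j) < a * a + a + 1 := by
    rw [hbv]; linarith
  exact_mod_cast this

lemma num2 (a k j b : ℕ) (h1 : 5 * k + 11 ≤ a + 1)
    (h2 : k * k + 5 * k + 12 ≤ 2 * (a + 1)) (hb : a + 1 = b + j) (hj : 2 ≤ j) (hjb : j ≤ b) :
    (b + 1) * b + 2 * (j * j) + k * k < a * a + a + 4 := by
  have hR1 : (5 : ℝ) * k + 11 ≤ a + 1 := by exact_mod_cast h1
  have hR2 : (k : ℝ) * k + 5 * k + 12 ≤ 2 * (a + 1) := by exact_mod_cast h2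
  have hRb : (a : ℝ) + 1 = b + j := by exact_mod_cast hb
  have hRj : (2 : ℝ) ≤ j := by exact_mod_cast hj
  have hRjb : (j : ℝ) ≤ b := by exact_mod_cast hjb
  have hk0 : (0 : ℝ) ≤ k := by positivity
  have hmain := interp (fun x => -3 * x ^ 2 + (2 * ((a : ℝ) + 1) + 1) * x
    + (4 - 2 * ((a : ℝ) + 1) - k * k)) _ _ ((a : ℝ) + 1) j (fun x => rfl) (by linarith) hRj
    (by linarith) (by nlinarith) (by
      set H := (a : ℝ) + 1 with hH
      have h6 : 5 * (k : ℝ) ≤ H - 11 := by linarith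
      have h8 : (5 * (k : ℝ)) * (5 * k) ≤ (H - 11) * (H - 11) :=
        mul_le_mul h6 h6 (by linarith) (by linarith)
      nlinarith)
  have hbv : (b : ℝ) = a + 1 - j := by linarith
  have : ((b : ℝ) + 1) * b + 2 * (j * j) + k * k < a * a + a + 4 := by
    rw [hbv]; linarith
  exact_mod_cast this

lemma num3 (a k t : ℕ) (htk : t + 1 ≤ k) (h1 : 5 * k + 11 ≤ a + 1) :
    (a + 1 + 1) * (a + 1 + 1) + 2 * (t * t + 2 * (t * (a + 1))) < 2 * (a * a + a + 1) := by
  have h6 : 5 * t + 15 ≤ a := by omega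
  obtain ⟨c, rfl⟩ : ∃ c, a = 5 * t + 15 + c := ⟨a - (5 * t + 15), by omega⟩
  ring_nf
  nlinarith [Nat.zero_le (t * t), Nat.zero_le (t * c), Nat.zero_le (c * c)]

lemma num4 (a k : ℕ) (h1 : 5 * k + 11 ≤ a + 1) :
    (a + 1 + 1) * (a + 1 + 1) + 2 * (k * k) < 2 * (a * a + a) := by
  obtain ⟨c, rfl⟩ : ∃ c, a = 5 * k + 10 + c := ⟨a - (5 * k + 10), by omega⟩
  ring_nf
  nlinarith [Nat.zero_le (k * k), Nat.zero_le (k * c), Nat.zero_le (c * c)]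

lemma combi {V : Type} [Fintype V] (G : SimpleGraph V) (k h : ℕ) (hk : 1 ≤ k)
    (h1 : 5 * k + 11 ≤ h) (h2 : k * k + 5 * k + 12 ≤ 2 * h) (hV : Fintype.card V = h + k)
    (N : Finset V) (hN : ∀ v, v ∉ N → dS G univ v = 0)
    (hD : (h - 1) * (h - 1) + N.card ≤ D2 G univ + 1) :
    (∀ l : ℕ, 3 ≤ l → l ≤ h + 1 → HasCycleLen G l) ∨
      ∃ T : Finset V, T.card = h ∧ ∀ v, v ∉ T → dS G T v ≤ 1 := by
  classical
  rcases Nat.lt_or_ge h N.card with hNc | hNc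
  swap
  · right
    obtain ⟨T, hNT, -, hT⟩ := Finset.exists_subsuperset_card_eq (subset_univ N) hNc
      (by rw [card_univ]; omega)
    refine ⟨T, hT, fun v hv => ?_⟩
    have := dS_mono (le_refl G) (subset_univ T) v
    rw [hN v (fun h => hv (hNT h))] at this
    omega
  have hDN : D2 G univ = D2 G N := by
    have := D2_union G N Nᶜ disjoint_compl_right
    rw [union_compl] at this
    rw [this]
    have e1 : D2 G Nᶜ = 0 := by
      unfold D2
      apply sum_eq_zero
      intro v hv
      have := dS_mono (le_refl G) (subset_univ Nᶜ) v
      rw [hN v (by simpa using hv)] at this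
      omega
    have e2 : ∑ x ∈ Nᶜ, dS G N x = 0 := by
      apply sum_eq_zero
      intro v hv
      have := dS_mono (le_refl G) (subset_univ N) v
      rw [hN v (by simpa using hv)] at this
      omega
    omega
  -- a densest subset
  obtain ⟨S, hS, hSmax⟩ := Finset.exists_max_image (powersetCard (h + 1) N) (fun S => D2 G S)
    (powersetCard_nonempty.2 hNc)
  rw [mem_powersetCard] at hS
  obtain ⟨hSN, hSc⟩ := hS
  obtain ⟨w, hwS, hwmin⟩ := Finset.exists_min_image S (fun v => dS G S v)
    (card_pos.1 (by omega))
  have hwT : w ∉ S.erase w := by simp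
  have hTc : (S.erase w).card = h := by rw [card_erase_of_mem hwS]; omega
  have hST : insert w (S.erase w) = S := insert_erase hwS
  have hdw : dS G S w = dS G (S.erase w) w := by
    have := dS_union G {w} (S.erase w) (by simp) w
    rw [← insert_eq, hST, dS_singleton_self] at this
    omega
  set δ := dS G S w with hδ
  have hDS : D2 G S = D2 G (S.erase w) + 2 * δ := by
    have := D2_insert G (S.erase w) w hwT
    rw [hST] at this
    omega
  have hout : ∀ v ∈ N \ S, dS G S v ≤ δ + 1 := by
    intro v hv
    rw [mem_sdiff] at hv
    have hvT : v ∉ S.erase w := fun h => hv.2 (mem_of_mem_erase h)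
    have h3 := hSmax (insert v (S.erase w)) (by
      rw [mem_powersetCard, card_insert_of_notMem hvT, hTc]
      refine ⟨?_, rfl⟩
      intro x hx
      rcases mem_insert.1 hx with rfl | hx
      · exact hv.1
      · exact hSN (mem_of_mem_erase hx))
    rw [D2_insert G _ v hvT, hDS] at h3
    have h4 := dS_union G {w} (S.erase w) (by simp) v
    rw [← insert_eq, hST] at h4
    have h5 := dS_le_card G {w} v
    rw [card_singleton] at h5
    omega
  obtain ⟨t, ht⟩ : ∃ t, N.card = h + 1 + t := ⟨N.card - (h + 1), by omega⟩
  have hNV : N.card ≤ h + k := by rw [← hV]; exact card_le_univ N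
  have htk : t + 1 ≤ k := by omega
  have hNS : (N \ S).card = t := by rw [card_sdiff_of_subset hSN]; omega
  have hDN2 : D2 G N ≤ D2 G S + t * (t - 1) + 2 * (t * (δ + 1)) := by
    have h3 := D2_union G S (N \ S) disjoint_sdiff
    rw [union_sdiff_of_subset hSN] at h3
    have h4 := D2_le G (N \ S)
    rw [hNS] at h4
    have h5 : ∑ x ∈ N \ S, dS G S x ≤ t * (δ + 1) := by
      calc _ ≤ ∑ x ∈ N \ S, (δ + 1) := sum_le_sum hout
        _ = _ := by rw [sum_const, hNS, smul_eq_mul]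
    omega
  obtain ⟨a, rfl⟩ : ∃ a, h = a + 1 := ⟨h - 1, by omega⟩
  have htt : t * (t - 1) + t = t * t := by
    cases t with
    | zero => rfl
    | succ t => simp; ring
  have hlow : a * a + a + 1 ≤ D2 G S + t * t + 2 * (t * δ) := by
    rw [hDN, ht] at hD
    simp only [Nat.add_sub_cancel] at hD
    have : t * (δ + 1) = t * δ + t := by ring
    omega
  have hδa : δ ≤ a + 1 := by
    have := dS_le_of_mem G S w hwS
    omega
  rcases Nat.lt_or_ge 1 δ with hδ2 | hδ1
  · left
    intro l hl hl2
    refine cycles_of_subset G S (a + 1 + 1) hSc (by omega) δ (fun v hv => hwmin v hv) ?_ ?_ l hl hl2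
    · intro j hj1 hj2
      obtain ⟨b, hb⟩ : ∃ b, a + 1 = b + j := ⟨a + 1 - j, by omega⟩
      have e1 : a + 1 + 1 - j = b + 1 := by omega
      rw [e1, Nat.add_sub_cancel]
      have hjt : t * δ ≤ t * j := Nat.mul_le_mul_left _ hj1
      have hjb : j ≤ b := by omega
      have : (b + 1) * b + 2 * (j * j) + t * t + 2 * (t * j) < a * a + a + 1 := by
        exact num1 a k t j b htk h1 h2 hb (by omega) hjb
      omega
    · have : t * δ ≤ t * (a + 1) := Nat.mul_le_mul_left _ hδa
      have : (a + 1 + 1) * (a + 1 + 1) + 2 * (t * t + 2 * (t * (a + 1))) < 2 * (a * a + a + 1) := num3 a k t htk h1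
      omega
  · set T := S.erase w with hT
    have hDT : a * a + a ≤ D2 G T + (t + 1) * (t + 1) := by
      have : t * δ ≤ t * 1 := Nat.mul_le_mul_left _ hδ1
      have : (t + 1) * (t + 1) = t * t + 2 * t + 1 := by ring
      omega
    have hkk : (t + 1) * (t + 1) ≤ k * k := Nat.mul_le_mul htk htk
    by_cases hu : ∃ u, u ∉ T ∧ 2 ≤ dS G T u
    · left
      obtain ⟨u, huT, hu2⟩ := hu
      have hDu := D2_insert G T u huT
      intro l hl hl2
      refine cycles_of_subset G (insert u T) (a + 1 + 1) ?_ (by omega) 2 ?_ ?_ ?_ l hl hl2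
      · rw [card_insert_of_notMem huT, hTc]
      · intro v hv
        rcases mem_insert.1 hv with rfl | hvT
        · exact hu2.trans (dS_mono le_rfl (subset_insert _ _) _)
        · refine le_trans ?_ (dS_mono le_rfl (subset_insert u T) v)
          by_contra hlt
          have := D2_small G T {v} (by simpa using hvT) 1 (by
            intro x hx; rw [mem_singleton] at hx; subst hx; omega)
          rw [card_singleton, hTc, Nat.add_sub_cancel] at this
          obtain ⟨b, rfl⟩ : ∃ b, a = b + 1 := ⟨a - 1, by omega⟩
          rw [Nat.add_sub_cancel] at this
          nlinarith
      · intro j hj1 hj2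
        obtain ⟨b, hb⟩ : ∃ b, a + 1 = b + j := ⟨a + 1 - j, by omega⟩
        have e1 : a + 1 + 1 - j = b + 1 := by omega
        rw [e1, Nat.add_sub_cancel]
        have hjb : j ≤ b := by omega
        have : (b + 1) * b + 2 * (j * j) + k * k < a * a + a + 4 := by
          exact num2 a k j b h1 h2 hb hj1 hjb
        omega
      · have : (a + 1 + 1) * (a + 1 + 1) + 2 * (k * k) < 2 * (a * a + a) := num4 a k h1
        omega
    · right
      push Not at hu
      exact ⟨T, hTc, fun v hv => by have := hu v hv; omega⟩

lemma specRad_eq {V : Type} [i1 : Fintype V] [i2 : DecidableEq V] (G : SimpleGraph V)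
    [i3 : DecidableRel G.Adj] : specRad G = sSup (spectrum ℝ (G.adjMatrix ℝ)) := by
  have key : ∀ (j1 : Fintype V) (j2 : DecidableEq V) (j3 : DecidableRel G.Adj),
      j1 = i1 → j2 = i2 → j3 = i3 →
      sSup (@spectrum ℝ (Matrix V V ℝ) _ (@Matrix.instRing V ℝ j1 j2 _)
        (@Matrix.instAlgebra V ℝ ℝ j1 j2 _ _ _) (@SimpleGraph.adjMatrix ℝ V G j3 _ _)) =
      sSup (@spectrum ℝ (Matrix V V ℝ) _ (@Matrix.instRing V ℝ i1 i2 _)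
        (@Matrix.instAlgebra V ℝ ℝ i1 i2 _ _ _) (@SimpleGraph.adjMatrix ℝ V G i3 _ _)) := by
    rintro _ _ _ rfl rfl rfl
    rfl
  exact key (Fintype.ofFinite V) (Classical.decEq V) (Classical.decRel G.Adj) (Subsingleton.elim _ _) (Subsingleton.elim _ _) (Subsingleton.elim _ _)

open Classical in
/-- The adjacency operator. -/
noncomputable def nb {V : Type} [Fintype V] (G : SimpleGraph V) (x : V → ℝ) (v : V) : ℝ :=
  ∑ w, if G.Adj v w then x w else 0

lemma nb_eq {V : Type} [Fintype V] (G : SimpleGraph V) [DecidableRel G.Adj] (x : V → ℝ) :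
    Matrix.mulVec (G.adjMatrix ℝ) x = nb G x := by
  funext v
  unfold nb
  simp only [Matrix.mulVec, dotProduct, SimpleGraph.adjMatrix_apply]
  apply sum_congr rfl
  intro w _
  by_cases h : G.Adj v w <;> simp [h]

lemma spec_max {V : Type} [Fintype V] [Nonempty V] (G : SimpleGraph V) :
    (∀ x : V → ℝ, ∑ v, x v * nb G x v ≤ specRad G * ∑ v, x v * x v) ∧
    (∀ x : V → ℝ, specRad G * ∑ v, x v * x v ≤ ∑ v, x v * nb G x v →
      ∀ v, nb G x v = specRad G * x v) ∧
    (∃ x : V → ℝ, x ≠ 0 ∧ ∀ v, nb G x v = specRad G * x v) := by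
  classical
  set A := G.adjMatrix ℝ with hA
  set ρ := specRad G with hρ
  have hH : A.IsHermitian := by
    rw [Matrix.IsHermitian, Matrix.conjTranspose_eq_transpose_of_trivial]
    exact G.transpose_adjMatrix
  have hfin : (spectrum ℝ A).Finite := Matrix.finite_real_spectrum
  have hne : (spectrum ℝ A).Nonempty :=
    ⟨_, hH.eigenvalues_mem_spectrum_real (Classical.arbitrary V)⟩
  have hρA : ρ = sSup (spectrum ℝ A) := specRad_eq G
  have hmem : ρ ∈ spectrum ℝ A := hρA ▸ hne.csSup_mem hfin
  have hle : ∀ μ ∈ spectrum ℝ A, μ ≤ ρ := fun μ hμ => hρA ▸ le_csSup hfin.bddAbove hμ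
  set B : Matrix V V ℝ := algebraMap ℝ (Matrix V V ℝ) ρ - A with hB
  have hBH : B.IsHermitian := by
    apply Matrix.IsHermitian.sub _ hH
    rw [Matrix.algebraMap_eq_diagonal]
    exact Matrix.isHermitian_diagonal _
  have hBP : B.PosSemidef := by
    rw [Matrix.posSemidef_iff_isHermitian_and_spectrum_nonneg]
    refine ⟨hBH, ?_⟩
    rw [hB, ← spectrum.singleton_sub_eq]
    intro r hr
    obtain ⟨s, hs, μ, hμ, rfl⟩ := Set.mem_sub.1 hr
    rw [Set.mem_singleton_iff] at hs
    subst hs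
    have := hle μ hμ
    simpa using this
  have hBv : ∀ x : V → ℝ, Matrix.mulVec B x = fun v => ρ * x v - nb G x v := by
    intro x
    rw [hB, Matrix.sub_mulVec, nb_eq, Algebra.algebraMap_eq_smul_one, Matrix.smul_mulVec,
      Matrix.one_mulVec]
    rfl
  have hq : ∀ x : V → ℝ, star x ⬝ᵥ Matrix.mulVec B x =
      ρ * ∑ v, x v * x v - ∑ v, x v * nb G x v := by
    intro x
    rw [hBv, dotProduct, mul_sum, ← sum_sub_distrib]
    apply sum_congr rfl
    intro v _
    simp
    ring
  refine ⟨?_, ?_, ?_⟩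
  · intro x
    have := hBP.dotProduct_mulVec_nonneg x
    rw [hq] at this
    linarith
  · intro x hx v
    have h1 := hBP.dotProduct_mulVec_nonneg x
    rw [hq] at h1
    have h2 : star x ⬝ᵥ Matrix.mulVec B x = 0 := by rw [hq]; linarith
    rw [hBP.dotProduct_mulVec_zero_iff, hBv] at h2
    have := congrFun h2 v
    simp only [Pi.zero_apply] at this
    linarith
  · rw [hH.spectrum_real_eq_range_eigenvalues] at hmem
    obtain ⟨i, hi⟩ := hmem
    have hev := hH.mulVec_eigenvectorBasis i
    refine ⟨(hH.eigenvectorBasis i).ofLp, ?_, ?_⟩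
    · intro h0
      have := hH.eigenvectorBasis.orthonormal.ne_zero i
      apply this
      ext v
      simpa using congrFun h0 v
    · intro v
      rw [nb_eq, hi] at hev
      have := congrFun hev v
      simpa using this

/-- A nonnegative eigenvector for the spectral radius. -/
lemma perron {V : Type} [Fintype V] [Nonempty V] (G : SimpleGraph V) :
    ∃ x : V → ℝ, (∀ v, 0 ≤ x v) ∧ x ≠ 0 ∧ ∀ v, nb G x v = specRad G * x v := by
  obtain ⟨-, h2, x, hx0, hx⟩ := spec_max G
  refine ⟨fun v => |x v|, fun v => abs_nonneg _, ?_, ?_⟩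
  · intro h
    apply hx0
    funext v
    simpa using congrFun h v
  · apply h2
    have e1 : ∀ v, |x v| * |x v| = x v * x v := fun v => abs_mul_abs_self _
    simp only [e1]
    rw [mul_sum]
    apply sum_le_sum
    intro v _
    have : specRad G * (x v * x v) = x v * nb G x v := by rw [hx]; ring
    rw [this]
    calc x v * nb G x v ≤ |x v * nb G x v| := le_abs_self _
      _ = |x v| * |nb G x v| := abs_mul _ _
      _ ≤ |x v| * nb G (fun v => |x v|) v := by
        apply mul_le_mul_of_nonneg_left _ (abs_nonneg _)
        unfold nb
        refine (abs_sum_le_sum_abs _ _).trans (sum_le_sum fun w _ => ?_)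
        split_ifs <;> simp

lemma specRad_iso {V W : Type} [Fintype V] [Fintype W] {G : SimpleGraph V} {H : SimpleGraph W}
    (e : G ≃g H) : specRad G = specRad H := by
  classical
  rw [specRad_eq, specRad_eq]
  have : Matrix.reindexAlgEquiv ℝ ℝ e.toEquiv (G.adjMatrix ℝ) = H.adjMatrix ℝ := by
    ext a b
    simp only [Matrix.coe_reindexAlgEquiv, Matrix.reindex_apply, Matrix.submatrix_apply,
      SimpleGraph.adjMatrix_apply]
    have : G.Adj (e.toEquiv.symm a) (e.toEquiv.symm b) ↔ H.Adj a b :=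
      e.symm.map_adj_iff
    simp only [this]
  rw [← this, AlgEquiv.spectrum_eq]

/-- Hong-type bound. -/
lemma hong {V : Type} [Fintype V] [Nonempty V] (G : SimpleGraph V) (c : ℕ) (hc : 1 ≤ c)
    (hcG : (c : ℝ) ≤ specRad G) :
    ∃ N : Finset V, (∀ v, v ∉ N → dS G univ v = 0) ∧ c * c + N.card ≤ D2 G univ + 1 := by
  classical
  obtain ⟨x, hx0, hxne, hx⟩ := perron G
  obtain ⟨u, -, hu⟩ := Finset.exists_max_image univ x univ_nonempty
  have hupos : 0 < x u := by
    by_contra h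
    apply hxne
    funext v
    exact le_antisymm ((hu v (mem_univ v)).trans (not_lt.1 h)) (hx0 v)
  set ρ := specRad G
  have hnb : ∀ v, nb G x v ≤ dS G univ v * x u := by
    intro v
    unfold nb dS
    rw [← sum_filter, ← nsmul_eq_mul]
    exact sum_le_card_nsmul _ _ _ (fun w _ => hu w (mem_univ w))
  have hρ1 : (1 : ℝ) ≤ c := by exact_mod_cast hc
  have h1 : ρ * ρ * x u ≤ (∑ j ∈ univ.filter (fun w => G.Adj u w), (dS G univ j : ℝ)) * x u := by
    calc ρ * ρ * x u = ρ * nb G x u := by rw [hx]; ring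
      _ = ∑ j ∈ univ.filter (fun w => G.Adj u w), nb G x j := by
        unfold nb
        rw [← sum_filter, mul_sum]
        exact sum_congr rfl (fun j _ => (hx j).symm)
      _ ≤ ∑ j ∈ univ.filter (fun w => G.Adj u w), (dS G univ j : ℝ) * x u :=
        sum_le_sum (fun j _ => hnb j)
      _ = _ := by rw [sum_mul]
  have h2 : ρ * ρ ≤ ∑ j ∈ univ.filter (fun w => G.Adj u w), (dS G univ j : ℝ) :=
    le_of_mul_le_mul_right h1 hupos
  have h3 : c * c ≤ ∑ j ∈ univ.filter (fun w => G.Adj u w), dS G univ j := by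
    have : (c : ℝ) * c ≤ ρ * ρ := mul_le_mul hcG hcG (by linarith) (by linarith)
    exact_mod_cast this.trans h2
  have hdu : dS G univ u ≠ 0 := by
    intro h0
    have := hnb u
    rw [h0, hx] at this
    have : 0 < ρ * x u := mul_pos (by linarith) hupos
    simp at *
    linarith
  set P := univ.filter (fun w => G.Adj u w) with hP
  set N := univ.filter (fun v => dS G univ v ≠ 0) with hN
  refine ⟨N, fun v hv => by simpa [hN] using hv, ?_⟩
  have hPc : P.card = dS G univ u := rfl
  have huP : u ∉ P := by simp [hP]
  have hsplit : D2 G univ = ∑ j ∈ insert u P, dS G univ j + ∑ j ∈ univ \ insert u P, dS G univ j := by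
    unfold D2
    rw [add_comm, sum_sdiff (subset_univ _)]
  rw [sum_insert huP] at hsplit
  have h4 : (N \ insert u P).card ≤ ∑ j ∈ univ \ insert u P, dS G univ j := by
    calc (N \ insert u P).card = ∑ j ∈ N \ insert u P, 1 := by simp
      _ ≤ ∑ j ∈ N \ insert u P, dS G univ j := by
        apply sum_le_sum
        intro j hj
        have := (mem_filter.1 (mem_sdiff.1 hj).1).2
        omega
      _ ≤ _ := sum_le_sum_of_subset (sdiff_subset_sdiff (subset_univ _) (Subset.refl _))
  have h5 : N.card ≤ (N \ insert u P).card + (insert u P).card := by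
    rw [← Nat.sub_le_iff_le_add]
    exact le_card_sdiff _ _
  rw [card_insert_of_notMem huP] at h5
  omega

/-- The comparison graph: a clique on `T` and a clique on the complement of `T` plus `w`. -/
def Hgr {V : Type} (T : Finset V) (w : V) : SimpleGraph V where
  Adj a b := a ≠ b ∧ (a = w ∨ b = w ∨ (a ∈ T ↔ b ∈ T))
  symm := ⟨fun a b h => ⟨h.1.symm, by tauto⟩⟩
  loopless := ⟨fun a h => h.1 rfl⟩

open Classical in
/-- Weighted adjacency between two sets. -/
noncomputable def qf {V : Type} (G : SimpleGraph V) (x : V → ℝ) (A B : Finset V) : ℝ :=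
  ∑ a ∈ A, ∑ b ∈ B, if G.Adj a b then x a * x b else 0

lemma qf_comm {V : Type} (G : SimpleGraph V) (x : V → ℝ) (A B : Finset V) :
    qf G x A B = qf G x B A := by
  unfold qf
  rw [sum_comm]
  refine sum_congr rfl fun b _ => sum_congr rfl fun a _ => ?_
  rw [mul_comm (x a)]
  by_cases h : G.Adj a b
  · simp [h, h.symm]
  · have h' : ¬ G.Adj b a := fun q => h q.symm
    simp [h, h']

open Classical in
lemma qf_split {V : Type} [Fintype V] (G : SimpleGraph V) (x : V → ℝ) (T : Finset V) :
    ∑ v, x v * nb G x v = qf G x T T + 2 * qf G x Tᶜ T + qf G x Tᶜ Tᶜ := by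
  have h : ∑ v, x v * nb G x v = qf G x univ univ := by
    unfold nb qf
    apply sum_congr rfl
    intro a _
    rw [mul_sum]
    apply sum_congr rfl
    intro b _
    split_ifs <;> simp
  have h1 : qf G x univ univ = qf G x T univ + qf G x Tᶜ univ := by
    unfold qf
    rw [sum_add_sum_compl]
  have h2 : ∀ A, qf G x A univ = qf G x A T + qf G x A Tᶜ := by
    intro A
    unfold qf
    rw [← sum_add_distrib]
    apply sum_congr rfl
    intro a _
    rw [sum_add_sum_compl]
  rw [h, h1, h2, h2, qf_comm G x T Tᶜ]
  ring

open Classical in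
/-- At most one neighbour in `T`: the sum over neighbours in `T`. -/
lemma row_le {V : Type} (G : SimpleGraph V) (x : V → ℝ) (hx : ∀ v, 0 ≤ x v)
    (T : Finset V) (w : V) (hw : ∀ b ∈ T, x b ≤ x w) (a : V) (hd : dS G T a ≤ 1) :
    ∑ b ∈ T, (if G.Adj a b then x b else 0) ≤ x w ∧
    (0 < x w → (∀ b ∈ T, b ≠ w → x b < x w) →
      x w ≤ ∑ b ∈ T, (if G.Adj a b then x b else 0) → G.Adj a w) := by
  rw [← sum_filter]
  unfold dS at hd
  rcases Nat.le_one_iff_eq_zero_or_eq_one.1 hd with h | h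
  · rw [card_eq_zero] at h
    rw [h]
    simp only [sum_empty]
    exact ⟨hx w, fun h1 _ h2 => absurd h1 (not_lt.2 h2)⟩
  · obtain ⟨c, hc⟩ := card_eq_one.1 h
    have hcm : c ∈ T.filter (fun w => G.Adj a w) := by rw [hc]; simp
    rw [mem_filter] at hcm
    rw [hc, sum_singleton]
    refine ⟨hw c hcm.1, fun _ h2 h3 => ?_⟩
    by_cases hcw : c = w
    · exact hcw ▸ hcm.2
    · exact absurd (h2 c hcm.1 hcw) (not_lt.2 h3)

lemma comparison {V : Type} [Fintype V] (G : SimpleGraph V) (T : Finset V) (hT : T.Nonempty)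
    (z : V) (hz : z ∉ T) (hd : ∀ v, v ∉ T → dS G T v ≤ 1)
    (hr : ∀ w ∈ T, specRad (Hgr T w) ≤ specRad G) : ∃ w ∈ T, G = Hgr T w := by
  classical
  haveI : Nonempty V := ⟨z⟩
  obtain ⟨x, hx0, hxne, hx⟩ := perron G
  obtain ⟨w, hwT, hw⟩ := Finset.exists_max_image T x hT
  refine ⟨w, hwT, ?_⟩
  have hr := hr w hwT
  set H := Hgr T w with hH
  have hadj : ∀ a b, H.Adj a b ↔ a ≠ b ∧ (a = w ∨ b = w ∨ (a ∈ T ↔ b ∈ T)) := fun a b => Iff.rfl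
  have hxx : 0 < ∑ v, x v * x v := by
    apply sum_pos' (fun v _ => mul_self_nonneg _)
    by_contra hcon
    push Not at hcon
    apply hxne
    funext v
    have := hcon v (mem_univ v)
    exact mul_self_eq_zero.1 (le_antisymm this (mul_self_nonneg _))
  have hQG : ∑ v, x v * nb G x v = specRad G * ∑ v, x v * x v := by
    rw [mul_sum]
    apply sum_congr rfl
    intro v _
    rw [hx]
    ring
  have hsame : ∀ A : Finset V, (∀ a ∈ A, ∀ b ∈ A, (a ∈ T ↔ b ∈ T)) → qf G x A A ≤ qf H x A A := by
    intro A hA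
    unfold qf
    refine sum_le_sum fun a ha => sum_le_sum fun b hb => ?_
    have h0 := mul_nonneg (hx0 a) (hx0 b)
    by_cases hab : G.Adj a b
    · have : H.Adj a b := (hadj a b).2 ⟨hab.ne, Or.inr (Or.inr (hA a ha b hb))⟩
      simp [hab, this]
    · rw [if_neg hab]
      split_ifs <;> simp [h0]
  have hHout : ∀ a, a ∉ T → ∀ b ∈ T, (H.Adj a b ↔ b = w) := by
    intro a ha b hb
    rw [hadj]
    constructor
    · rintro ⟨_, h | h | h⟩
      · exact absurd (h ▸ hwT) ha
      · exact h
      · exact absurd (h.2 hb) ha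
    · rintro rfl
      exact ⟨fun h => ha (h ▸ hb), Or.inr (Or.inl rfl)⟩
  have hHrow : ∀ a, a ∉ T → ∑ b ∈ T, (if H.Adj a b then x b else 0) = x w := by
    intro a ha
    rw [sum_congr rfl (g := fun b => if b = w then x b else 0)]
    · simp [hwT]
    · intro b hb
      simp only [hHout a ha b hb]
  have hcross : qf G x Tᶜ T ≤ qf H x Tᶜ T := by
    have e : ∀ (F : SimpleGraph V) a, (∑ b ∈ T, if F.Adj a b then x a * x b else 0) =
        x a * ∑ b ∈ T, (if F.Adj a b then x b else 0) := by
      intro F a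
      rw [mul_sum]
      apply sum_congr rfl
      intro b _
      split_ifs <;> simp
    unfold qf
    apply sum_le_sum
    intro a ha
    have haT : a ∉ T := by simpa using ha
    rw [e, e, hHrow a haT]
    exact mul_le_mul_of_nonneg_left (row_le G x hx0 T w hw a (hd a haT)).1 (hx0 a)
  have hQ : ∑ v, x v * nb G x v ≤ ∑ v, x v * nb H x v := by
    rw [qf_split G x T, qf_split H x T]
    have h1 := hsame T (fun a ha b hb => by simp [ha, hb])
    have h2 := hsame Tᶜ (fun a ha b hb => by
      rw [mem_compl] at ha hb
      simp [ha, hb])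
    linarith
  obtain ⟨s1, s2, -⟩ := spec_max H
  have hle := s1 x
  have hρ : specRad H = specRad G := by
    apply le_antisymm hr
    have : specRad G * ∑ v, x v * x v ≤ specRad H * ∑ v, x v * x v := by linarith
    exact le_of_mul_le_mul_right this hxx
  have hxH := s2 x (by rw [hρ]; linarith)
  have hrow : ∀ a, nb G x a = nb H x a := fun a => by rw [hx, hxH, hρ]
  have hterm : ∀ a b, 0 ≤ (if H.Adj a b then x b else 0) := by
    intro a b
    split_ifs
    · exact hx0 b
    · exact le_rfl
  have hsingle : ∀ a b, H.Adj a b → x b ≤ nb H x a := by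
    intro a b hab
    have := single_le_sum (f := fun b => if H.Adj a b then x b else 0)
      (fun b _ => hterm a b) (mem_univ b)
    simp only [hab, if_true] at this
    unfold nb
    convert this
  have hwb : ∀ b, b ≠ w → H.Adj w b := fun b hb => (hadj w b).2 ⟨hb.symm, Or.inl rfl⟩
  have hxw : 0 < x w := by
    rcases (hx0 w).lt_or_eq with h | h
    · exact h
    · exfalso
      apply hxne
      funext b
      by_cases hb : b = w
      · rw [hb, ← h]; rfl
      · have := hsingle w b (hwb b hb)
        rw [hxH, ← h, mul_zero] at this
        exact le_antisymm this (hx0 b)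
  have hpos : ∀ a, 0 < x a := by
    intro a
    by_cases ha : a = w
    · rw [ha]; exact hxw
    · have := hsingle a w (hwb a ha).symm
      rw [hxH] at this
      rcases (hx0 a).lt_or_eq with h | h
      · exact h
      · rw [← h, mul_zero] at this
        linarith
  have hnbw : nb H x w = ∑ b, x b - x w := by
    have : ∑ b, x b - x w = ∑ b, (x b - if b = w then x b else 0) := by
      rw [sum_sub_distrib]
      simp
    rw [this]
    unfold nb
    apply sum_congr rfl
    intro b _
    by_cases hb : b = w
    · subst hb; simp
    · simp [hb, hwb b hb]
  have hnbc : ∀ c ∈ T, c ≠ w → nb H x c = ∑ b ∈ T, x b - x c := by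
    intro c hc hcw
    have : ∑ b ∈ T, x b - x c = ∑ b, ((if b ∈ T then x b else 0) - if b = c then x b else 0) := by
      rw [sum_sub_distrib]
      simp
    rw [this]
    unfold nb
    apply sum_congr rfl
    intro b _
    by_cases hb : b = c
    · subst hb; simp [hc]
    · by_cases hbT : b ∈ T
      · have : H.Adj c b := (hadj c b).2 ⟨fun h => hb h.symm, Or.inr (Or.inr (by simp [hc, hbT]))⟩
        simp [this, hb, hbT]
      · have : ¬ H.Adj c b := fun h => by
          have := (hHout b hbT c hc).1 h.symm
          exact hcw this
        simp [this, hb, hbT]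
  have hρ0 : 0 ≤ specRad H := by
    have h1 := hsingle w z (hwb z (fun h => hz (h ▸ hwT)))
    rw [hxH] at h1
    have h2 := hpos z
    by_contra hneg
    have := mul_neg_of_neg_of_pos (not_le.1 hneg) hxw
    linarith
  have hstrict : ∀ c ∈ T, c ≠ w → x c < x w := by
    intro c hc hcw
    have h1 := hnbc c hc hcw
    rw [hxH] at h1
    have h2 := hnbw
    rw [hxH] at h2
    have h3 : ∑ b ∈ T, x b + ∑ b ∈ Tᶜ, x b = ∑ b, x b := sum_add_sum_compl T x
    have h4 : 0 < ∑ b ∈ Tᶜ, x b := sum_pos (fun b _ => hpos b) ⟨z, by simpa using hz⟩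
    by_contra hcon
    have h5 := mul_le_mul_of_nonneg_left (not_lt.1 hcon) hρ0
    linarith [not_lt.1 hcon]
  have hsplit : ∀ (F : SimpleGraph V) a, nb F x a = ∑ b ∈ T, (if F.Adj a b then x b else 0) +
      ∑ b ∈ Tᶜ, (if F.Adj a b then x b else 0) := by
    intro F a
    rw [sum_add_sum_compl]
    rfl
  have hout : ∀ a, a ∉ T → ∀ b, (G.Adj a b ↔ H.Adj a b) := by
    intro a ha
    obtain ⟨r1, r2⟩ := row_le G x hx0 T w hw a (hd a ha)
    have e := hrow a
    rw [hsplit, hsplit, hHrow a ha] at e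
    have t : ∀ b ∈ Tᶜ, (if G.Adj a b then x b else 0) ≤ (if H.Adj a b then x b else 0) := by
      intro b hb
      by_cases hab : G.Adj a b
      · have : H.Adj a b := (hadj a b).2 ⟨hab.ne, Or.inr (Or.inr (by
          rw [mem_compl] at hb; simp [ha, hb]))⟩
        simp [hab, this]
      · rw [if_neg hab]
        exact hterm a b
    have t' := sum_le_sum t
    have haw := r2 hxw hstrict (by linarith)
    have teq := (sum_eq_sum_iff_of_le t).1 (by linarith)
    intro b
    by_cases hb : b ∈ T
    · rw [hHout a ha b hb]
      constructor
      · intro hab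
        have h1 := hd a ha
        unfold dS at h1
        exact card_le_one.1 h1 b (mem_filter.2 ⟨hb, hab⟩) w (mem_filter.2 ⟨hwT, haw⟩)
      · rintro rfl
        exact haw
    · have := teq b (by simpa using hb)
      have hb0 := hpos b
      by_cases h1 : G.Adj a b <;> by_cases h2 : H.Adj a b <;> simp [h1, h2] at this ⊢ <;> linarith
  have hin : ∀ a ∈ T, a ≠ w → ∀ b, (G.Adj a b ↔ H.Adj a b) := by
    intro a ha haw
    have t : ∀ b ∈ (univ : Finset V),
        (if G.Adj a b then x b else 0) ≤ (if H.Adj a b then x b else 0) := by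
      intro b _
      by_cases hab : G.Adj a b
      · have : H.Adj a b := by
          by_cases hb : b ∈ T
          · exact (hadj a b).2 ⟨hab.ne, Or.inr (Or.inr (by simp [ha, hb]))⟩
          · exact ((hout b hb a).1 hab.symm).symm
        simp [hab, this]
      · rw [if_neg hab]
        exact hterm a b
    have teq := (sum_eq_sum_iff_of_le t).1 (hrow a)
    intro b
    have := teq b (mem_univ b)
    have hb0 := hpos b
    by_cases h1 : G.Adj a b <;> by_cases h2 : H.Adj a b <;> simp [h1, h2] at this ⊢ <;> linarith
  ext a b
  by_cases ha : a ∈ T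
  · by_cases haw : a = w
    · by_cases hb : b ∈ T
      · by_cases hbw : b = w
        · rw [haw, hbw]; simp
        · rw [G.adj_comm, H.adj_comm]
          exact hin b hb hbw a
      · rw [G.adj_comm, H.adj_comm]
        exact hout b hb a
    · exact hin a ha haw b
  · exact hout a ha b

lemma Hgr_iso (n k : ℕ) (hk : k < n) (T : Finset (Fin n)) (hT : T.card = n - k) (w : Fin n)
    (hw : w ∈ T) : Nonempty (Hgr T w ≃g Lgraph n k) := by
  classical
  have hc : Fintype.card {i : Fin n // i ∈ T} = Fintype.card {i : Fin n // i.val < n - k} := by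
    rw [Fintype.card_coe, hT, Fintype.card_subtype]
    have := Fin.card_filter_val_lt (n := n) (m := n - k)
    simp [this]
  obtain ⟨e0⟩ := Fintype.card_eq.1 hc
  let e1 : Fin n ≃ Fin n := e0.extendSubtype
  let o : Fin n := ⟨0, by omega⟩
  have hmem : ∀ a, (e1 a).val < n - k ↔ a ∈ T := by
    intro a
    constructor
    · intro h
      by_contra hcon
      exact e0.extendSubtype_not_mem a hcon h
    · intro h
      exact e0.extendSubtype_mem a h
  have ho : o.val < n - k := by simp only [o]; omega
  let e := e1.trans (Equiv.swap (e1 w) o)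
  have hew : e w = o := by simp [e]
  have he : ∀ a, (e a).val < n - k ↔ a ∈ T := by
    intro a
    rw [← hmem a]
    simp only [e, Equiv.trans_apply]
    rw [Equiv.swap_apply_def]
    split_ifs with h1 h2
    · rw [h1]; simp only [ho, hmem, hw]
    · rw [h2]; simp only [ho, hmem, hw]
    · rfl
  refine ⟨⟨e, ?_⟩⟩
  intro a b
  have h0 : ∀ a, (e a).val = 0 ↔ a = w := by
    intro a
    rw [← e.injective.eq_iff, hew, Fin.ext_iff]
  simp only [Lgraph, SimpleGraph.fromRel_adj, h0, ← not_lt, he]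
  simp only [Hgr, ne_eq, e.injective.eq_iff]
  tauto

lemma specRad_Lgraph (n k : ℕ) (hk : k < n) :
    ((n - k - 1 : ℕ) : ℝ) ≤ specRad (Lgraph n k) := by
  classical
  haveI : Nonempty (Fin n) := ⟨⟨0, by omega⟩⟩
  obtain ⟨s1, -, -⟩ := spec_max (Lgraph n k)
  set S : Finset (Fin n) := univ.filter (fun i => i.val < n - k) with hS
  have hSc : S.card = n - k := by
    have := Fin.card_filter_val_lt (n := n) (m := n - k)
    simp [hS, this]
  let x : Fin n → ℝ := fun i => if i ∈ S then 1 else 0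
  have h1 : ∑ v, x v * x v = (n - k : ℕ) := by
    simp [x, hSc]
  have h2 : ∀ v ∈ S, ((n - k - 1 : ℕ) : ℝ) ≤ nb (Lgraph n k) x v := by
    intro v hv
    have : ((n - k - 1 : ℕ) : ℝ) = ∑ w, if w ∈ S.erase v then (1 : ℝ) else 0 := by
      rw [← hSc, ← card_erase_of_mem hv]
      rw [sum_ite_mem]
      simp
    rw [this]
    unfold nb
    apply sum_le_sum
    intro w _
    by_cases hw : w ∈ S.erase v
    · have hwS := mem_of_mem_erase hw
      have hne := ne_of_mem_erase hw
      have : (Lgraph n k).Adj v w := by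
        simp only [Lgraph, SimpleGraph.fromRel_adj]
        refine ⟨hne.symm, Or.inl (Or.inr (Or.inr (Or.inl ⟨?_, ?_⟩)))⟩
        · simpa [hS] using hv
        · simpa [hS] using hwS
      simp [hw, this, x, hwS]
    · rw [if_neg hw]
      simp only [x]
      split_ifs <;> norm_num
  have h3 : ((n - k : ℕ) : ℝ) * ((n - k - 1 : ℕ) : ℝ) ≤ ∑ v, x v * nb (Lgraph n k) x v := by
    calc ((n - k : ℕ) : ℝ) * ((n - k - 1 : ℕ) : ℝ) = ∑ v ∈ S, ((n - k - 1 : ℕ) : ℝ) := by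
          rw [sum_const, hSc, nsmul_eq_mul]
      _ ≤ ∑ v ∈ S, nb (Lgraph n k) x v := sum_le_sum h2
      _ = ∑ v, x v * nb (Lgraph n k) x v := by
          simp [x]
  have h4 := s1 x
  rw [h1] at h4
  have h5 : (0 : ℝ) < ((n - k : ℕ) : ℝ) := by
    exact_mod_cast (by omega : 0 < n - k)
  have h6 := h3.trans h4
  rw [mul_comm] at h6
  exact le_of_mul_le_mul_right h6 h5

/-- Theorem 1.6 (a): spectral radius condition for cycles of consecutive lengths. -/
theorem spectral_large_cycles (k n : ℕ) (G : SimpleGraph (Fin n)) (hk : 1 ≤ k)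
    (hn1 : 6 * k + 11 ≤ n) (hn2 : (k + 3) * (k + 4) / 2 ≤ n)
    (hr : specRad (Lgraph n k) ≤ specRad G) :
    (∀ l : ℕ, 3 ≤ l → l ≤ n - k + 1 → HasCycleLen G l) ∨
      Nonempty (G ≃g Lgraph n k) := by
  classical
  haveI : Nonempty (Fin n) := ⟨⟨0, by omega⟩⟩
  have hkn : k < n := by omega
  obtain ⟨N, hN, hD⟩ := hong G (n - k - 1) (by omega) ((specRad_Lgraph n k hkn).trans hr)
  have hev : 2 ∣ (k + 3) * (k + 4) := (Nat.even_mul_succ_self (k + 3)).two_dvd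
  have h2 : k * k + 5 * k + 12 ≤ 2 * (n - k) := by
    have h3 : (k + 3) * (k + 4) ≤ 2 * n := by omega
    have h4 : (k + 3) * (k + 4) = k * k + 7 * k + 12 := by ring
    omega
  rcases combi G k (n - k) hk (by omega) h2 (by rw [Fintype.card_fin]; omega) N hN hD with h | h
  · exact Or.inl h
  · right
    obtain ⟨T, hT, hd⟩ := h
    have hTne : T.Nonempty := by
      rw [← card_pos]
      omega
    obtain ⟨z, hz⟩ : ∃ z, z ∉ T := by
      by_contra hcon
      push Not at hcon
      have : T = univ := eq_univ_iff_forall.2 hcon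
      rw [this, card_univ, Fintype.card_fin] at hT
      omega
    obtain ⟨w, hw, rfl⟩ := comparison G T hTne z hz hd (fun w hw => by
      obtain ⟨e⟩ := Hgr_iso n k hkn T hT w hw
      rw [specRad_iso e]
      exact hr)
    exact Hgr_iso n k hkn T hT w hw
end
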